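/- arXiv:math/0504481 — 2 statements merged into one kernel-verified Lean document; each statement's English description precedes it below -/
import Mathlib

section
/- For all n ≥ 1, T > 0, C₁, C₂, M, Λ > 0 there exists C > 0 with the following property. Let g = (g^{αβ}) be a C¹ field of symmetric n×n matrices on an open neighborhood of [−T,T] × ℝⁿ with C₁·Id ≤ g ≤ C₂·Id and all first-order partial derivatives of the g^{αβ} bounded by M; let b⁰,…,bⁿ, c be measurable and bounded by M; let f be continuous with τ ↦ ‖f(τ,·)‖_{L²} integrable on [−T,T]; let φ : ℝⁿ → ℝ be Lipschitz with constant at most Λ, with −T < φ(x) < T for all x, and weakly spacelike: Σ g^{αβ}(φ(x),x) ∂_αφ(x) ∂_βφ(x) ≤ 1 for almost every x; let v be C² on a neighborhood of [−T,T] × ℝⁿ, vanishing for |x| ≥ R for some R, and satisfying ∂_t²v − Σ g^{αβ}∂_α∂_β v + b⁰∂_t v + Σ b^α∂_α v + c v = f. Then, with w(x) := v(φ(x),x) (a Lipschitz, compactly supported function) and ∇w its almost-everywhere gradient, for every s ∈ [−T,T]: ∫_{ℝⁿ} (w(x)² + |∇w(x)|²) dx ≤ C·(E(s,v) + (∫_{−T}^{T}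 ‖f(τ,·)‖_{L²(ℝⁿ)} dτ)²). -/
open MeasureTheory

/-- Time partial derivative `∂_t u` of a function on `ℝ × ℝⁿ`. -/
noncomputable def Dt {n : ℕ} (u : ℝ × (Fin n → ℝ) → ℝ) (p : ℝ × (Fin n → ℝ)) : ℝ :=
  fderiv ℝ u p (1, 0)

/-- Spatial partial derivative `∂_α u` of a function on `ℝ × ℝⁿ`. -/
noncomputable def Dx {n : ℕ} (α : Fin n) (u : ℝ × (Fin n → ℝ) → ℝ)
    (p : ℝ × (Fin n → ℝ)) : ℝ :=
  fderiv ℝ u p (0, Pi.single α 1)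

/-- The energy at time `t` of `v` for the time-dependent metric `g`. -/
noncomputable def energy {n : ℕ} (g : Fin n → Fin n → ℝ × (Fin n → ℝ) → ℝ)
    (v : ℝ × (Fin n → ℝ) → ℝ) (t : ℝ) : ℝ :=
  ∫ x : Fin n → ℝ,
    ((Dt v (t, x)) ^ 2 + (∑ α, ∑ β, g α β (t, x) * Dx α v (t, x) * Dx β v (t, x))
      + (v (t, x)) ^ 2)

/-!
Multiplying the equation by `2 ∂_t v` exhibits the energy density `e` and the flux
`F_α = -2 ∂_t v Σ_β g^{αβ} ∂_β v` as a spacetime vector field whose divergence is at most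
`K e + 2 |∂_t v| |f|`. The divergence theorem between the slice `t = s` and the graph of `φ` is
obtained by differentiating `x ↦ ∫_s^{φ x} F_α(t, x) dt`: this function is compactly supported and
Lipschitz, so its gradient integrates to zero. For constant `φ` it gives, after Grönwall, the energy
estimate on slices; for the given `φ` it then bounds the flux of `(e, F)` through the graph. With
`p = (φ x, x)` and `w x = v p`, completing the square turns that flux into
`w² + (∂_t v)² (1 - g(∇φ, ∇φ)) + g(∇w, ∇w)`, which dominates `w² + |∇w|²` exactly because the graph
is weakly spacelike.
-/

section CompactSupport

variable {E : Type*} [NormedAddCommGroup E]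

lemma exists_forall_lt_norm_snd_eq_zero {H : ℝ × E → ℝ} (hH : HasCompactSupport H) :
    ∃ R : ℝ, ∀ t x, R < ‖x‖ → H (t, x) = 0 := by
  obtain ⟨R, hR⟩ := hH.isCompact.isBounded.exists_norm_le
  refine ⟨R, fun t x hx => image_eq_zero_of_notMem_tsupport fun h => hx.not_ge ?_⟩
  exact (le_max_right _ _).trans (hR _ h)

lemma hasCompactSupport_of_forall_lt_norm [ProperSpace E] {w : E → ℝ} {R : ℝ}
    (h : ∀ x, R < ‖x‖ → w x = 0) : HasCompactSupport w :=
  .intro (isCompact_closedBall 0 R) fun x hx => h x (by simpa using hx)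

lemma hasCompactSupport_graph [ProperSpace E] {H : ℝ × E → ℝ} (hH : HasCompactSupport H)
    (φ : E → ℝ) : HasCompactSupport fun x => H (φ x, x) := by
  obtain ⟨R, hR⟩ := exists_forall_lt_norm_snd_eq_zero hH
  exact hasCompactSupport_of_forall_lt_norm fun x hx => hR _ x hx

end CompactSupport

section GraphIntegral

variable {E : Type*} [NormedAddCommGroup E] [NormedSpace ℝ E]

lemma hasFDerivAt_comp_graph {F : ℝ × E → ℝ} {φ : E → ℝ} {x : E}
    (hF : DifferentiableAt ℝ F (φ x, x)) (hφ : DifferentiableAt ℝ φ x) :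
    HasFDerivAt (fun y => F (φ y, y))
      (fderiv ℝ F (φ x, x) (1, 0) • fderiv ℝ φ x + fderiv ℝ F (φ x, x) ∘L .inr ℝ ℝ E) x := by
  have hgraph := hφ.hasFDerivAt.prodMk (hasFDerivAt_id x)
  refine (hF.hasFDerivAt.comp (f := fun y => (φ y, y)) x hgraph).congr_fderiv ?_
  ext e
  have hsplit : ((fderiv ℝ φ x e, e) : ℝ × E) = fderiv ℝ φ x e • (1, 0) + (0, e) := by simp
  change fderiv ℝ F (φ x, x) (fderiv ℝ φ x e, e) = _
  rw [hsplit, map_add, map_smul, smul_eq_mul, mul_comm]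
  rfl

variable {F : ℝ × E → ℝ}

lemma abs_intervalIntegral_le_of_forall_lt_abs {G : ℝ → ℝ} {R C : ℝ} (hR : 0 ≤ R)
    (hG : ∀ t, R < |t| → G t = 0) (hC : ∀ t, |G t| ≤ C) (s τ : ℝ) :
    |∫ t in s..τ, G t| ≤ C * (2 * R) := by
  have hsupp : ∫ t in Set.uIoc s τ ∩ Metric.closedBall 0 R, G t = ∫ t in Set.uIoc s τ, G t :=
    (setIntegral_eq_of_subset_of_forall_sdiff_eq_zero measurableSet_uIoc Set.inter_subset_left
      fun t ht => hG t (not_le.1 fun h => ht.2 ⟨ht.1, by simpa using h⟩)).symm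
  have hfin : volume (Metric.closedBall (0 : ℝ) R) < ⊤ := measure_closedBall_lt_top
  have hC₀ : 0 ≤ C := (abs_nonneg _).trans (hC 0)
  calc |∫ t in s..τ, G t|
      = ‖∫ t in Set.uIoc s τ ∩ Metric.closedBall 0 R, G t‖ := by
        rw [hsupp, ← intervalIntegral.norm_intervalIntegral_eq, Real.norm_eq_abs]
    _ ≤ C * volume.real (Set.uIoc s τ ∩ Metric.closedBall 0 R) :=
        norm_setIntegral_le_of_norm_le_const
          ((measure_mono Set.inter_subset_right).trans_lt hfin) fun t _ => hC t
    _ ≤ C * volume.real (Metric.closedBall (0 : ℝ) R) := by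
        gcongr
        exacts [hfin.ne, Set.inter_subset_right]
    _ = C * (2 * R) := by rw [Real.volume_real_closedBall hR]

lemma exists_lipschitzWith_intervalIntegral_graph (hF : ContDiff ℝ 1 F)
    (hFc : HasCompactSupport F) {L : NNReal} {φ : E → ℝ} (hφ : LipschitzWith L φ) (s : ℝ) :
    ∃ K, LipschitzWith K fun x => ∫ t in s..φ x, F (t, x) := by
  obtain ⟨C, hC⟩ := hFc.exists_bound_of_continuous hF.continuous
  obtain ⟨K, hK⟩ := hF.lipschitzWith_of_hasCompactSupport hFc one_ne_zero
  obtain ⟨R, hR₀, hR⟩ : ∃ R, 0 ≤ R ∧ ∀ t x, R < |t| → F (t, x) = 0 := by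
    obtain ⟨R, hR₀, hR⟩ := hFc.isCompact.isBounded.exists_pos_norm_le
    refine ⟨R, hR₀.le, fun t x ht => image_eq_zero_of_notMem_tsupport fun h => ht.not_ge ?_⟩
    exact (le_max_left _ _).trans (hR _ h)
  have hslice (x : E) : Continuous fun t => F (t, x) := hF.continuous.comp (.prodMk_left x)
  refine ⟨_, LipschitzWith.of_dist_le' (K := K * (2 * R) + C * L) fun x y => ?_⟩
  have hsplit : (∫ t in s..φ x, F (t, x)) - ∫ t in s..φ y, F (t, y)
      = (∫ t in s..φ x, (F (t, x) - F (t, y))) + ∫ t in φ y..φ x, F (t, y) := by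
    have hadd := intervalIntegral.integral_add_adjacent_intervals (a := s) (b := φ y) (c := φ x)
      ((hslice y).intervalIntegrable (μ := volume) _ _) ((hslice y).intervalIntegrable _ _)
    rw [intervalIntegral.integral_sub ((hslice x).intervalIntegrable _ _)
      ((hslice y).intervalIntegrable _ _)]
    linarith
  have hspace : |∫ t in s..φ x, (F (t, x) - F (t, y))| ≤ K * dist x y * (2 * R) :=
    abs_intervalIntegral_le_of_forall_lt_abs hR₀
      (fun t ht => by rw [hR t x ht, hR t y ht, sub_self])
      (fun t => by simpa [Prod.dist_eq, Real.dist_eq] using hK.dist_le_mul (t, x) (t, y)) _ _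
  have htime : |∫ t in φ y..φ x, F (t, y)| ≤ C * (L * dist x y) := by
    refine (intervalIntegral.norm_integral_le_of_norm_le_const fun t _ => hC (t, y)).trans ?_
    exact mul_le_mul_of_nonneg_left (hφ.dist_le_mul x y) ((norm_nonneg _).trans (hC 0))
  rw [Real.dist_eq, hsplit]
  calc _ ≤ K * dist x y * (2 * R) + C * (L * dist x y) :=
        (abs_add_le _ _).trans (add_le_add hspace htime)
    _ = (K * (2 * R) + C * L) * dist x y := by ring

variable [FiniteDimensional ℝ E]

lemma hasFDerivAt_intervalIntegral_of_contDiff (hF : ContDiff ℝ 1 F) (s τ : ℝ) (x : E) :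
    HasFDerivAt (fun y => ∫ t in s..τ, F (t, y))
      (∫ t in s..τ, fderiv ℝ F (t, x) ∘L .inr ℝ ℝ E) x := by
  have hF' : Continuous fun p => fderiv ℝ F p ∘L ContinuousLinearMap.inr ℝ ℝ E :=
    (hF.continuous_fderiv one_ne_zero).clm_comp continuous_const
  obtain ⟨C, hC⟩ := (isCompact_uIcc.prod (isCompact_closedBall x 1)).exists_bound_of_continuousOn
    (s := Set.uIcc s τ ×ˢ Metric.closedBall x 1) hF'.continuousOn
  refine intervalIntegral.hasFDerivAt_integral_of_dominated_of_fderiv_le (𝕜 := ℝ)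
    (μ := volume) (F := fun y t => F (t, y))
    (F' := fun y t => fderiv ℝ F (t, y) ∘L .inr ℝ ℝ E) (bound := fun _ => C)
    (Metric.ball_mem_nhds x one_pos) (.of_forall fun y => ?_) ?_ ?_
    (.of_forall fun t ht y hy => ?_) intervalIntegrable_const (.of_forall fun t _ y _ => ?_)
  · exact (hF.continuous.comp (.prodMk_left y)).aestronglyMeasurable
  · exact (hF.continuous.comp (.prodMk_left x)).intervalIntegrable _ _
  · exact (hF'.comp (.prodMk_left x)).aestronglyMeasurable
  · exact hC (t, y) ⟨Set.uIoc_subset_uIcc ht, Metric.ball_subset_closedBall hy⟩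
  · exact (hF.differentiable one_ne_zero (t, y)).hasFDerivAt.comp y (hasFDerivAt_prodMk_right t y)

lemma hasFDerivAt_intervalIntegral_graph (hF : ContDiff ℝ 1 F) (s : ℝ) {φ : E → ℝ}
    {x : E} (hφ : DifferentiableAt ℝ φ x) :
    HasFDerivAt (fun y => ∫ t in s..φ y, F (t, y))
      (F (φ x, x) • fderiv ℝ φ x + ∫ t in s..φ x, fderiv ℝ F (t, x) ∘L .inr ℝ ℝ E) x := by
  have hF₀ := hF.continuous
  have hF' : Continuous fun p => fderiv ℝ F p ∘L ContinuousLinearMap.inr ℝ ℝ E :=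
    (hF.continuous_fderiv one_ne_zero).clm_comp continuous_const
  have htime (p : ℝ × E) : HasFDerivAt (fun τ => ∫ t in s..τ, F (t, p.2))
      (.toSpanSingleton ℝ (F p)) p.1 := by
    have hslice : Continuous fun t => F (t, p.2) := by fun_prop
    exact (hslice.integral_hasStrictDerivAt s p.1).hasDerivAt.hasFDerivAt
  have hprimitive := (hasStrictFDerivAt_uncurry_coprod (𝕜 := ℝ) (u := (φ x, x))
    (f := fun τ y => ∫ t in s..τ, F (t, y)) (f₁ := fun τ y => .toSpanSingleton ℝ (F (τ, y)))
    (f₂ := fun τ y => ∫ t in s..τ, fderiv ℝ F (t, y) ∘L .inr ℝ ℝ E)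
    (.of_forall htime) (.of_forall fun p => hasFDerivAt_intervalIntegral_of_contDiff hF s p.1 p.2)
    ((ContinuousLinearMap.toSpanSingletonCLE (𝕜 := ℝ)).continuous.comp hF₀).continuousAt
    (intervalIntegral.continuous_parametric_intervalIntegral_of_continuous
      (f := fun (p : ℝ × E) t => fderiv ℝ F (t, p.2) ∘L .inr ℝ ℝ E)
      (hF'.comp (by fun_prop)) continuous_fst).continuousAt).hasFDerivAt
  have hgraph := hφ.hasFDerivAt.prodMk (hasFDerivAt_id x)
  refine (hprimitive.comp (f := fun y => (φ y, y)) x hgraph).congr_fderiv ?_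
  ext e
  simp [Function.HasUncurry.uncurry, mul_comm]

end GraphIntegral

section GraphFlux

variable {E : Type*} [NormedAddCommGroup E] [NormedSpace ℝ E] [FiniteDimensional ℝ E]
  [MeasurableSpace E] [BorelSpace E] {μ : Measure E} [μ.IsAddHaarMeasure]

lemma integral_fderiv_apply_eq_zero {K : NNReal} {w : E → ℝ} (hw : LipschitzWith K w)
    (hwc : HasCompactSupport w) (e : E) : ∫ x, fderiv ℝ w x e ∂μ = 0 := by
  have hparts := LipschitzWith.integral_lineDeriv_mul_eq (μ := μ)
    (LipschitzWith.const (1 : ℝ) : LipschitzWith 0 fun _ : E => (1 : ℝ)) hw hwc (-e)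
  calc ∫ x, fderiv ℝ w x e ∂μ = ∫ x, lineDeriv ℝ w x (- -e) * 1 ∂μ := by
        refine integral_congr_ae ?_
        filter_upwards [hw.ae_differentiableAt (μ := μ)] with x hx
        rw [hx.lineDeriv_eq_fderiv, neg_neg, mul_one]
    _ = 0 := by simpa [lineDeriv] using hparts.symm

/- The integrand is the derivative along `e` of the Lipschitz function
`x ↦ ∫ t in s..φ x, F (t, x)`. -/
theorem integral_graph_mul_fderiv_add_eq_zero {F : ℝ × E → ℝ} (hF : ContDiff ℝ 1 F)
    (hFc : HasCompactSupport F) {L : NNReal} {φ : E → ℝ} (hφ : LipschitzWith L φ) (s : ℝ) (e : E) :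
    ∫ x, (F (φ x, x) * fderiv ℝ φ x e + ∫ t in s..φ x, fderiv ℝ F (t, x) (0, e)) ∂μ = 0 := by
  obtain ⟨K, hK⟩ := exists_lipschitzWith_intervalIntegral_graph hF hFc hφ s
  obtain ⟨R, hR⟩ := exists_forall_lt_norm_snd_eq_zero hFc
  have hsupp : HasCompactSupport fun x => ∫ t in s..φ x, F (t, x) :=
    hasCompactSupport_of_forall_lt_norm (R := R) fun x hx => by simp [hR _ x hx]
  have hF' : Continuous fun p => fderiv ℝ F p ∘L ContinuousLinearMap.inr ℝ ℝ E :=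
    (hF.continuous_fderiv one_ne_zero).clm_comp continuous_const
  refine (integral_congr_ae ?_).trans (integral_fderiv_apply_eq_zero (μ := μ) hK hsupp e)
  filter_upwards [hφ.ae_differentiableAt (μ := μ)] with x hx
  have hint := (hF'.comp (.prodMk_left x)).intervalIntegrable (μ := volume) s (φ x)
  rw [(hasFDerivAt_intervalIntegral_graph hF s hx).fderiv, add_apply, smul_apply, smul_eq_mul]
  exact congrArg _ (ContinuousLinearMap.intervalIntegral_apply hint e).symm

end GraphFlux

section GraphIntegrability

variable {E : Type*} [NormedAddCommGroup E] [ProperSpace E] [MeasurableSpace E] [BorelSpace E]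
  {μ : Measure E} [IsFiniteMeasureOnCompacts μ] {H : ℝ × E → ℝ} {φ : E → ℝ}

lemma integrable_graph (hH : Continuous H) (hHc : HasCompactSupport H) (hφ : Continuous φ) :
    Integrable (fun x => H (φ x, x)) μ :=
  Continuous.integrable_of_hasCompactSupport (by fun_prop) (hasCompactSupport_graph hHc φ)

lemma integrable_intervalIntegral_graph (hH : Continuous H) (hHc : HasCompactSupport H)
    (hφ : Continuous φ) (s : ℝ) : Integrable (fun x => ∫ t in s..φ x, H (t, x)) μ := by
  obtain ⟨R, hR⟩ := exists_forall_lt_norm_snd_eq_zero hHc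
  refine Continuous.integrable_of_hasCompactSupport ?_
    (hasCompactSupport_of_forall_lt_norm (R := R) fun x hx => by simp [hR _ x hx])
  exact intervalIntegral.continuous_parametric_intervalIntegral_of_continuous
    (f := fun x t => H (t, x)) (hH.comp continuous_swap) hφ

lemma continuous_integral_slice (hH : Continuous H) (hHc : HasCompactSupport H) :
    Continuous fun t => ∫ x, H (t, x) ∂μ := by
  obtain ⟨R, hR⟩ := exists_forall_lt_norm_snd_eq_zero hHc
  rw [← continuousOn_univ]
  exact continuousOn_integral_of_compact_support (f := fun t x => H (t, x))
    (isCompact_closedBall 0 R) (hH.continuousOn (s := Set.univ ×ˢ Set.univ))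
    fun t x _ hx => hR t x (by simpa using hx)

lemma integral_intervalIntegral_graph_le [SecondCountableTopology E] [SFinite μ]
    (hH : Continuous H) (hHc : HasCompactSupport H) (hφ : Continuous φ) {s a b : ℝ}
    (hs : s ∈ Set.Icc a b) (hφab : ∀ x, φ x ∈ Set.Icc a b) :
    ∫ x, (∫ t in s..φ x, H (t, x)) ∂μ ≤ ∫ t in a..b, ∫ x, |H (t, x)| ∂μ := by
  have hab : a ≤ b := hs.1.trans hs.2
  have habsc : HasCompactSupport fun p => |H p| := hHc.comp_left abs_zero
  rw [intervalIntegral_integral_swap (f := fun t x => |H (t, x)|)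
    ((hH.abs.integrable_of_hasCompactSupport habsc))]
  refine integral_mono (integrable_intervalIntegral_graph hH hHc hφ s)
    (integrable_intervalIntegral_graph hH.abs habsc continuous_const a) fun x => ?_
  have hsub : Set.uIoc s (φ x) ⊆ Set.Ioc a b :=
    Set.Ioc_subset_Ioc (le_min hs.1 (hφab x).1) (max_le hs.2 (hφab x).2)
  have hint : IntegrableOn (fun t => |H (t, x)|) (Set.Ioc a b) :=
    (Continuous.integrableOn_Icc (by fun_prop)).mono_set Set.Ioc_subset_Icc_self
  calc ∫ t in s..φ x, H (t, x)
      ≤ ∫ t in Set.uIoc s (φ x), |H (t, x)| :=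
        (le_abs_self _).trans
          (intervalIntegral.norm_integral_le_integral_norm_uIoc (f := fun t => H (t, x)))
    _ ≤ ∫ t in Set.Ioc a b, |H (t, x)| :=
        setIntegral_mono_set hint (.of_forall fun _ => abs_nonneg _) hsub.eventuallyLE
    _ = ∫ t in a..b, |H (t, x)| := (intervalIntegral.integral_of_le hab).symm

end GraphIntegrability

section SpacetimeDivergence

variable {n : ℕ}

/-- The divergence `∂_t e + Σ_α ∂_α F_α` of the vector field `(e, F)` on `ℝ × ℝⁿ`. -/
noncomputable def spacetimeDiv (e : ℝ × (Fin n → ℝ) → ℝ) (F : Fin n → ℝ × (Fin n → ℝ) → ℝ)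
    (p : ℝ × (Fin n → ℝ)) : ℝ :=
  Dt e p + ∑ α, Dx α (F α) p

/-- The density, with respect to `dx`, of the flux of the vector field `(e, F)` on `ℝ × ℝⁿ`
upwards through the graph `t = φ x`, whose unnormalised normal is `(1, -∇φ)`. -/
noncomputable def graphFlux (e : ℝ × (Fin n → ℝ) → ℝ) (F : Fin n → ℝ × (Fin n → ℝ) → ℝ)
    (φ : (Fin n → ℝ) → ℝ) (x : Fin n → ℝ) : ℝ :=
  e (φ x, x) - ∑ α, F α (φ x, x) * fderiv ℝ φ x (Pi.single α 1)

lemma continuous_Dt {u : ℝ × (Fin n → ℝ) → ℝ} (hu : ContDiff ℝ 1 u) : Continuous (Dt u) :=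
  (hu.continuous_fderiv one_ne_zero).clm_apply continuous_const

lemma continuous_Dx {u : ℝ × (Fin n → ℝ) → ℝ} (hu : ContDiff ℝ 1 u) (α : Fin n) :
    Continuous (Dx α u) :=
  (hu.continuous_fderiv one_ne_zero).clm_apply continuous_const

lemma intervalIntegral_Dt {u : ℝ × (Fin n → ℝ) → ℝ} (hu : ContDiff ℝ 1 u) (s τ : ℝ)
    (x : Fin n → ℝ) : ∫ t in s..τ, Dt u (t, x) = u (τ, x) - u (s, x) :=
  intervalIntegral.integral_eq_sub_of_hasDerivAt (f := fun t => u (t, x))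
    (fun t _ => by
      simpa [Dt, Function.comp_def] using!
        ((hu.differentiable one_ne_zero (t, x)).hasFDerivAt.comp t
          (hasFDerivAt_prodMk_left t x)).hasDerivAt)
    (((continuous_Dt hu).comp (.prodMk_left x)).intervalIntegrable _ _)

variable {e : ℝ × (Fin n → ℝ) → ℝ} {F : Fin n → ℝ × (Fin n → ℝ) → ℝ} {L : NNReal}
  {φ : (Fin n → ℝ) → ℝ} {a b s : ℝ}

lemma continuous_spacetimeDiv (he : ContDiff ℝ 1 e) (hF : ∀ α, ContDiff ℝ 1 (F α)) :
    Continuous (spacetimeDiv e F) :=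
  (continuous_Dt he).add (continuous_finsetSum _ fun α _ => continuous_Dx (hF α) α)

lemma hasCompactSupport_spacetimeDiv (hec : HasCompactSupport e)
    (hFc : ∀ α, HasCompactSupport (F α)) : HasCompactSupport (spacetimeDiv e F) := by
  have hsum : HasCompactSupport (∑ α, Dx α (F α)) :=
    Finset.sum_induction _ HasCompactSupport (fun _ _ => .add) .zero
      fun α _ => (hFc α).fderiv_apply ℝ _
  simpa [spacetimeDiv, Pi.add_def, Finset.sum_fn] using! ((hec.fderiv_apply ℝ _).add hsum)

lemma integrable_graph_mul_fderiv {H : ℝ × (Fin n → ℝ) → ℝ} (hH : Continuous H)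
    (hHc : HasCompactSupport H) (hφ : LipschitzWith L φ) (α : Fin n) :
    Integrable fun x => H (φ x, x) * fderiv ℝ φ x (Pi.single α 1) := by
  refine (integrable_graph hH hHc hφ.continuous).mul_bdd (c := L * ‖(Pi.single α 1 : Fin n → ℝ)‖)
    (measurable_fderiv_apply_const ℝ φ _).aestronglyMeasurable (.of_forall fun x => ?_)
  exact (fderiv ℝ φ x).le_of_opNorm_le (norm_fderiv_le_of_lipschitz ℝ hφ) _

lemma integrable_graphFlux (he : Continuous e) (hec : HasCompactSupport e)
    (hF : ∀ α, Continuous (F α)) (hFc : ∀ α, HasCompactSupport (F α)) (hφ : LipschitzWith L φ) :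
    Integrable (graphFlux e F φ) :=
  (integrable_graph he hec hφ.continuous).sub
    (integrable_finsetSum _ fun α _ => integrable_graph_mul_fderiv (hF α) (hFc α) hφ α)

theorem integral_graphFlux_eq (he : ContDiff ℝ 1 e) (hec : HasCompactSupport e)
    (hF : ∀ α, ContDiff ℝ 1 (F α)) (hFc : ∀ α, HasCompactSupport (F α)) (hφ : LipschitzWith L φ)
    (s : ℝ) :
    ∫ x, graphFlux e F φ x
      = (∫ x, e (s, x)) + ∫ x, ∫ t in s..φ x, spacetimeDiv e F (t, x) := by
  have hDe := continuous_Dt he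
  have hDF α := continuous_Dx (hF α) α
  have htop := integrable_graph (μ := volume) he.continuous hec hφ.continuous
  have hbot := integrable_graph (μ := volume) he.continuous hec (continuous_const (y := s))
  have hside α := integrable_graph_mul_fderiv (hF α).continuous (hFc α) hφ α
  have hdiv α := integrable_intervalIntegral_graph (μ := volume) (hDF α)
    ((hFc α).fderiv_apply ℝ _) hφ.continuous s
  have hspace α : ∫ x, ∫ t in s..φ x, Dx α (F α) (t, x)
      = -∫ x, F α (φ x, x) * fderiv ℝ φ x (Pi.single α 1) := by
    have hzero := integral_graph_mul_fderiv_add_eq_zero (μ := volume) (hF α) (hFc α) hφ s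
      (Pi.single α 1)
    exact eq_neg_of_add_eq_zero_right ((integral_add (hside α) (hdiv α)).symm.trans hzero)
  have htime x : ∫ t in s..φ x, spacetimeDiv e F (t, x)
      = (e (φ x, x) - e (s, x)) + ∑ α, ∫ t in s..φ x, Dx α (F α) (t, x) := by
    simp only [spacetimeDiv]
    rw [intervalIntegral.integral_add (Continuous.intervalIntegrable (by fun_prop) _ _)
      (Continuous.intervalIntegrable (by fun_prop) _ _), intervalIntegral_Dt he,
      intervalIntegral.integral_finsetSum
        fun α _ => Continuous.intervalIntegrable (by fun_prop) _ _]
  simp only [graphFlux, htime]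
  rw [integral_sub htop (integrable_finsetSum _ fun α _ => hside α),
    integral_finsetSum _ fun α _ => hside α,
    integral_add (f := fun x => e (φ x, x) - e (s, x)) (htop.sub hbot)
      (integrable_finsetSum _ fun α _ => hdiv α),
    integral_sub htop hbot, integral_finsetSum _ fun α _ => hdiv α]
  simp only [hspace, Finset.sum_neg_distrib]
  ring

theorem integral_graphFlux_le (he : ContDiff ℝ 1 e) (hec : HasCompactSupport e)
    (hF : ∀ α, ContDiff ℝ 1 (F α)) (hFc : ∀ α, HasCompactSupport (F α)) (hφ : LipschitzWith L φ)
    (hs : s ∈ Set.Icc a b) (hφab : ∀ x, φ x ∈ Set.Icc a b) :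
    ∫ x, graphFlux e F φ x
      ≤ (∫ x, e (s, x)) + ∫ t in a..b, ∫ x, |spacetimeDiv e F (t, x)| := by
  rw [integral_graphFlux_eq he hec hF hFc hφ s]
  gcongr
  exact integral_intervalIntegral_graph_le (μ := volume) (continuous_spacetimeDiv he hF)
    (hasCompactSupport_spacetimeDiv hec hFc) hφ.continuous hs hφab

end SpacetimeDivergence

section Gronwall

variable {u h : ℝ → ℝ} {δ K a b s t : ℝ}

lemma le_mul_exp_of_le_add_integral (hK : 0 ≤ K) (hu : Continuous u)
    (hbound : ∀ t ∈ Set.Icc a b, u t ≤ δ + K * ∫ r in a..t, u r) (ht : t ∈ Set.Icc a b) :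
    u t ≤ δ * Real.exp (K * (t - a)) := by
  have hderiv r : HasDerivAt (fun t => δ + K * ∫ r in a..t, u r) (K * u r) r :=
    ((hu.integral_hasStrictDerivAt a r).hasDerivAt.const_mul K).const_add δ
  refine (hbound t ht).trans ?_
  rw [← gronwallBound_ε0]
  refine le_gronwallBound_of_liminf_deriv_right_le (f' := fun r => K * u r)
    (fun r _ => (hderiv r).continuousAt.continuousWithinAt)
    (fun r _ _ hr => (hderiv r).hasDerivWithinAt.liminf_right_slope_le hr) (by simp)
    (fun r hr => ?_) t ht
  simpa using mul_le_mul_of_nonneg_left (hbound r ⟨hr.1, hr.2.le⟩) hK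

lemma le_mul_exp_of_le_add_setIntegral_uIoc (hK : 0 ≤ K) (hu : Continuous u)
    (hs : s ∈ Set.Icc a b)
    (hbound : ∀ t ∈ Set.Icc a b, u t ≤ δ + K * ∫ r in Set.uIoc s t, u r) (ht : t ∈ Set.Icc a b) :
    u t ≤ δ * Real.exp (K * |t - s|) := by
  rcases le_total s t with hst | hts
  · rw [abs_of_nonneg (sub_nonneg.2 hst)]
    refine le_mul_exp_of_le_add_integral hK hu (fun r hr => ?_) (Set.right_mem_Icc.2 hst)
    rw [intervalIntegral.integral_of_le hr.1, ← Set.uIoc_of_le hr.1]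
    exact hbound r ⟨hs.1.trans hr.1, hr.2.trans ht.2⟩
  · rw [abs_of_nonpos (sub_nonpos.2 hts)]
    have hneg := le_mul_exp_of_le_add_integral (u := fun r => u (-r)) (δ := δ) (a := -s) (b := -t)
      hK (hu.comp continuous_neg) (fun r hr => ?_) (Set.right_mem_Icc.2 (neg_le_neg hts))
    · simpa [sub_eq_add_neg, add_comm] using hneg
    · have hrs : -r ≤ s := by linarith [hr.1]
      rw [intervalIntegral.integral_comp_neg, neg_neg, intervalIntegral.integral_of_le hrs,
        ← Set.uIoc_of_ge hrs]
      exact hbound (-r) ⟨by linarith [hr.2, ht.1], hrs.trans hs.2⟩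

lemma le_of_le_mul_add_sqrt {A B I y : ℝ} (hA : 1 ≤ A) (hB : 0 ≤ B) (hy : 0 ≤ y)
    (h : B ≤ (y + 2 * √B * I) * A) : B ≤ 4 * A ^ 2 * (y + I ^ 2) := by
  have hyoung : 2 * √B * I * A ≤ B / 2 + 2 * (A * I) ^ 2 := by
    nlinarith [sq_nonneg (√B - 2 * (A * I)), Real.sq_sqrt hB]
  have hA' : 2 * (A * y) ≤ 4 * A ^ 2 * y := by nlinarith [mul_nonneg (sub_nonneg.2 hA) hy]
  linarith

theorem le_of_le_add_setIntegral_sqrt (hK : 0 ≤ K) (hu : Continuous u)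
    (hu₀ : ∀ t ∈ Set.Icc a b, 0 ≤ u t) (hh : IntegrableOn h (Set.Icc a b))
    (hh₀ : ∀ t ∈ Set.Icc a b, 0 ≤ h t) (hs : s ∈ Set.Icc a b)
    (hbound : ∀ t ∈ Set.Icc a b,
      u t ≤ u s + ∫ r in Set.uIoc s t, (K * u r + 2 * √(u r) * h r)) (ht : t ∈ Set.Icc a b) :
    u t ≤ 4 * Real.exp (K * (b - a)) ^ 2 * (u s + (∫ r in Set.Icc a b, h r) ^ 2) := by
  set I := ∫ r in Set.Icc a b, h r
  obtain ⟨m, hm, hmax⟩ := isCompact_Icc.exists_isMaxOn ⟨s, hs⟩ hu.continuousOn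
  have hlinear r (hr : r ∈ Set.Icc a b) :
      u r ≤ (u s + 2 * √(u m) * I) + K * ∫ q in Set.uIoc s r, u q := by
    have hsub : Set.uIoc s r ⊆ Set.Icc a b :=
      Set.uIoc_subset_uIcc.trans (Set.uIcc_subset_Icc hs hr)
    have hint : IntegrableOn (fun q => K * u q) (Set.uIoc s r) :=
      ((hu.const_mul K).integrableOn_Icc (a := a) (b := b)).mono_set hsub
    have hsqrt : IntegrableOn (fun q => 2 * √(u q) * h q) (Set.uIoc s r) :=
      (hh.continuousOn_mul (by fun_prop) isCompact_Icc).mono_set hsub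
    have hsource : ∫ q in Set.uIoc s r, 2 * √(u q) * h q ≤ 2 * √(u m) * I := by
      have hmax_int : IntegrableOn (fun q => 2 * √(u m) * h q) (Set.Icc a b) := hh.const_mul _
      rw [← integral_const_mul]
      refine (setIntegral_mono_on hsqrt (hmax_int.mono_set hsub) measurableSet_uIoc
        fun q hq => ?_).trans (setIntegral_mono_set hmax_int ?_ hsub.eventuallyLE)
      · have := hh₀ q (hsub hq)
        have : u q ≤ u m := hmax (hsub hq)
        gcongr
      · refine (ae_restrict_mem measurableSet_Icc).mono fun q hq => ?_
        exact mul_nonneg (by positivity) (hh₀ q hq)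
    have := hbound r hr
    rw [integral_add hint hsqrt, integral_const_mul] at this
    linarith
  have hexp : Real.exp (K * |m - s|) ≤ Real.exp (K * (b - a)) := by
    have : |m - s| ≤ b - a := abs_sub_le_of_le_of_le hm.1 hm.2 hs.1 hs.2
    gcongr
  refine (hmax ht).trans (le_of_le_mul_add_sqrt
    (Real.one_le_exp (by nlinarith [hs.1.trans hs.2])) (hu₀ m hm) (hu₀ s hs) ?_)
  refine (le_mul_exp_of_le_add_setIntegral_uIoc hK hu hs hlinear hm).trans ?_
  have hI : 0 ≤ I := setIntegral_nonneg measurableSet_Icc hh₀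
  have := hu₀ s hs
  gcongr

end Gronwall

section Cutoff

variable {V : Type*} [NormedAddCommGroup V] [NormedSpace ℝ V] {k : ℕ∞} {U K : Set V}

lemma contDiff_mul_of_tsupport_subset {f χ : V → ℝ} (hU : IsOpen U) (hf : ContDiffOn ℝ k f U)
    (hχ : ContDiff ℝ k χ) (hχU : tsupport χ ⊆ U) : ContDiff ℝ k fun p => χ p * f p :=
  contMDiff_iff_contDiff.1 <| contMDiff_of_tsupport fun _ hp => ContDiffAt.contMDiffAt <|
    hχ.contDiffAt.mul <| hf.contDiffAt <| hU.mem_nhds <| hχU <| tsupport_mul_subset_left hp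

open scoped Manifold in
lemma exists_contDiff_eventuallyEq_one [FiniteDimensional ℝ V] (hK : IsCompact K) (hU : IsOpen U)
    (hKU : K ⊆ U) :
    ∃ χ : V → ℝ, ContDiff ℝ k χ ∧ HasCompactSupport χ ∧ tsupport χ ⊆ U ∧
      ∀ p ∈ K, ∀ᶠ q in nhds p, χ q = 1 := by
  obtain ⟨K', hK', hKK', hK'U⟩ := exists_compact_between hK hU hKU
  obtain ⟨χ, hχ₁, hχ₀, -⟩ := exists_contMDiffMap_one_nhds_of_subset_interior
    (n := k) 𝓘(ℝ, V) hK.isClosed hKK'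
  have hsupp : tsupport χ ⊆ K' :=
    closure_minimal (fun x hx => by_contra fun h => hx (hχ₀ x h)) hK'.isClosed
  exact ⟨χ, χ.contMDiff.contDiff, hK'.of_isClosed_subset isClosed_closure hsupp,
    hsupp.trans hK'U, fun p hp => hχ₁.filter_mono (nhds_le_nhdsSet hp)⟩

lemma exists_contDiff_hasCompactSupport_eventuallyEq {E : Type*} [NormedAddCommGroup E]
    [NormedSpace ℝ E] [FiniteDimensional ℝ E] {U : Set (ℝ × E)} {a b R : ℝ} {f : ℝ × E → ℝ}
    (hU : IsOpen U) (habU : Set.Icc a b ×ˢ Set.univ ⊆ U) (hf : ContDiffOn ℝ k f U)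
    (hfR : ∀ t x, R < ‖x‖ → f (t, x) = 0) :
    ∃ f' : ℝ × E → ℝ, ContDiff ℝ k f' ∧ HasCompactSupport f' ∧
      ∀ p ∈ Set.Icc a b ×ˢ Set.univ, f' =ᶠ[nhds p] f := by
  obtain ⟨χ, hχ, hχc, hχU, hχ₁⟩ := exists_contDiff_eventuallyEq_one (k := k)
    (isCompact_Icc.prod (isCompact_closedBall (0 : E) R)) hU
    ((Set.prod_mono_right (Set.subset_univ _)).trans habU)
  refine ⟨_, contDiff_mul_of_tsupport_subset hU hf hχ hχU, hχc.mul_right, fun p hp => ?_⟩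
  rcases le_or_gt ‖p.2‖ R with hpR | hpR
  · filter_upwards [hχ₁ p ⟨hp.1, by simpa using hpR⟩] with q hq
    rw [hq, one_mul]
  · have hfar : ∀ᶠ q : ℝ × E in nhds p, R < ‖q.2‖ :=
      (continuous_snd.norm.tendsto p).eventually (lt_mem_nhds hpR)
    filter_upwards [hfar] with q hq
    rw [hfR q.1 q.2 hq, mul_zero]

end Cutoff

section GraphEstimate

variable {n : ℕ} {e : ℝ × (Fin n → ℝ) → ℝ} {F : Fin n → ℝ × (Fin n → ℝ) → ℝ} {L : NNReal}
  {φ : (Fin n → ℝ) → ℝ} {h : ℝ → ℝ} {K R a b s t : ℝ}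

lemma integral_slice_le (he : ContDiff ℝ 1 e) (hec : HasCompactSupport e)
    (hF : ∀ α, ContDiff ℝ 1 (F α)) (hFc : ∀ α, HasCompactSupport (F α)) (s t : ℝ) :
    ∫ x, e (t, x)
      ≤ (∫ x, e (s, x)) + ∫ r in Set.uIoc s t, ∫ x, |spacetimeDiv e F (r, x)| := by
  have hle := integral_graphFlux_le he hec hF hFc (LipschitzWith.const (α := Fin n → ℝ) t)
    (s := s) ⟨min_le_left s t, le_max_left s t⟩ fun _ => ⟨min_le_right s t, le_max_right s t⟩
  rw [intervalIntegral.integral_of_le min_le_max] at hle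
  simpa [graphFlux] using! hle

theorem integral_slice_le_of_spacetimeDiv_le (he : ContDiff ℝ 1 e) (hec : HasCompactSupport e)
    (hF : ∀ α, ContDiff ℝ 1 (F α)) (hFc : ∀ α, HasCompactSupport (F α)) (hK : 0 ≤ K)
    (he₀ : ∀ t ∈ Set.Icc a b, 0 ≤ ∫ x, e (t, x)) (hh : IntegrableOn h (Set.Icc a b))
    (hh₀ : ∀ t ∈ Set.Icc a b, 0 ≤ h t)
    (hdiv : ∀ t ∈ Set.Icc a b, ∫ x, |spacetimeDiv e F (t, x)|
      ≤ K * (∫ x, e (t, x)) + 2 * √(∫ x, e (t, x)) * h t)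
    (hs : s ∈ Set.Icc a b) (ht : t ∈ Set.Icc a b) :
    ∫ x, e (t, x)
      ≤ 4 * Real.exp (K * (b - a)) ^ 2 * ((∫ x, e (s, x)) + (∫ r in Set.Icc a b, h r) ^ 2) := by
  have hu := continuous_integral_slice (μ := volume) he.continuous hec
  have hdivc := continuous_integral_slice (μ := volume) (continuous_spacetimeDiv he hF).abs
    ((hasCompactSupport_spacetimeDiv hec hFc).comp_left abs_zero)
  refine le_of_le_add_setIntegral_sqrt hK hu he₀ hh hh₀ hs (fun t ht => ?_) ht
  have hsub : Set.uIoc s t ⊆ Set.Icc a b :=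
    Set.uIoc_subset_uIcc.trans (Set.uIcc_subset_Icc hs ht)
  refine (integral_slice_le he hec hF hFc s t).trans (add_le_add_right
    (setIntegral_mono_on (hdivc.integrableOn_Icc.mono_set hsub) (.mono_set ?_ hsub)
      measurableSet_uIoc fun r hr => hdiv r (hsub hr)) _)
  exact (hu.const_mul K).integrableOn_Icc.add
    (hh.continuousOn_mul (hu.sqrt.const_mul 2).continuousOn isCompact_Icc)

/-- The constant of the graph estimate for a vector field whose divergence grows at rate `K`
in a time slab of length `ℓ`, as a function of `κ = K * ℓ`. -/
noncomputable def graphFactor (κ : ℝ) : ℝ :=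
  1 + 4 * (κ + 1) * Real.exp κ ^ 2

lemma graphFactor_pos {κ : ℝ} (hκ : 0 ≤ κ) : 0 < graphFactor κ := by
  unfold graphFactor
  positivity

theorem integral_graphFlux_le_of_contDiff (he : ContDiff ℝ 1 e) (hec : HasCompactSupport e)
    (hF : ∀ α, ContDiff ℝ 1 (F α)) (hFc : ∀ α, HasCompactSupport (F α)) (hK : 0 ≤ K)
    (he₀ : ∀ t ∈ Set.Icc a b, 0 ≤ ∫ x, e (t, x)) (hh : IntegrableOn h (Set.Icc a b))
    (hh₀ : ∀ t ∈ Set.Icc a b, 0 ≤ h t)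
    (hdiv : ∀ t ∈ Set.Icc a b, ∫ x, |spacetimeDiv e F (t, x)|
      ≤ K * (∫ x, e (t, x)) + 2 * √(∫ x, e (t, x)) * h t)
    (hφ : LipschitzWith L φ) (hφab : ∀ x, φ x ∈ Set.Icc a b) (hs : s ∈ Set.Icc a b) :
    ∫ x, graphFlux e F φ x
      ≤ graphFactor (K * (b - a)) * ((∫ x, e (s, x)) + (∫ r in Set.Icc a b, h r) ^ 2) := by
  have hab : a ≤ b := hs.1.trans hs.2
  set I := ∫ r in Set.Icc a b, h r
  set B := 4 * Real.exp (K * (b - a)) ^ 2 * ((∫ x, e (s, x)) + I ^ 2) with hB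
  have hB₀ : 0 ≤ B := mul_nonneg (by positivity) (add_nonneg (he₀ s hs) (sq_nonneg I))
  have hdivB t (ht : t ∈ Set.Icc a b) :
      ∫ x, |spacetimeDiv e F (t, x)| ≤ K * B + 2 * √B * h t := by
    have heB : ∫ x, e (t, x) ≤ B :=
      integral_slice_le_of_spacetimeDiv_le he hec hF hFc hK he₀ hh hh₀ hdiv hs ht
    have := hh₀ t ht
    refine (hdiv t ht).trans ?_
    gcongr
  have hdivc := continuous_integral_slice (μ := volume) (continuous_spacetimeDiv he hF).abs
    ((hasCompactSupport_spacetimeDiv hec hFc).comp_left abs_zero)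
  have hbulk : ∫ t in a..b, ∫ x, |spacetimeDiv e F (t, x)| ≤ K * (b - a) * B + 2 * √B * I := by
    have hconst : IntegrableOn (fun _ => K * B) (Set.Icc a b) :=
      continuous_const.integrableOn_Icc
    rw [intervalIntegral.integral_of_le hab, ← integral_Icc_eq_integral_Ioc]
    refine (setIntegral_mono_on hdivc.integrableOn_Icc (hconst.add (hh.const_mul _))
      measurableSet_Icc hdivB).trans_eq ?_
    rw [integral_add' hconst (hh.const_mul _), setIntegral_const, integral_const_mul,
      Real.volume_real_Icc_of_le hab, smul_eq_mul]
    ring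
  have hyoung : 2 * √B * I ≤ B + I ^ 2 := by
    nlinarith [sq_nonneg (√B - I), Real.sq_sqrt hB₀]
  calc ∫ x, graphFlux e F φ x
      ≤ (∫ x, e (s, x)) + (K * (b - a) * B + (B + I ^ 2)) := by
        linarith [integral_graphFlux_le he hec hF hFc hφ hs hφab]
    _ = graphFactor (K * (b - a)) * ((∫ x, e (s, x)) + I ^ 2) := by
        rw [hB, graphFactor]
        ring

theorem integrable_graphFlux_and_integral_le {U : Set (ℝ × (Fin n → ℝ))} (hU : IsOpen U)
    (habU : Set.Icc a b ×ˢ Set.univ ⊆ U) (he : ContDiffOn ℝ 1 e U)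
    (heR : ∀ t x, R < ‖x‖ → e (t, x) = 0) (hF : ∀ α, ContDiffOn ℝ 1 (F α) U)
    (hFR : ∀ α t x, R < ‖x‖ → F α (t, x) = 0) (hK : 0 ≤ K)
    (he₀ : ∀ t ∈ Set.Icc a b, 0 ≤ ∫ x, e (t, x)) (hh : IntegrableOn h (Set.Icc a b))
    (hh₀ : ∀ t ∈ Set.Icc a b, 0 ≤ h t)
    (hdiv : ∀ t ∈ Set.Icc a b, ∫ x, |spacetimeDiv e F (t, x)|
      ≤ K * (∫ x, e (t, x)) + 2 * √(∫ x, e (t, x)) * h t)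
    (hφ : LipschitzWith L φ) (hφab : ∀ x, φ x ∈ Set.Icc a b) (hs : s ∈ Set.Icc a b) :
    Integrable (graphFlux e F φ) ∧ ∫ x, graphFlux e F φ x
      ≤ graphFactor (K * (b - a)) * ((∫ x, e (s, x)) + (∫ r in Set.Icc a b, h r) ^ 2) := by
  obtain ⟨e', he', hec', hee'⟩ := exists_contDiff_hasCompactSupport_eventuallyEq hU habU he heR
  choose F' hF' hFc' hFF' using fun α =>
    exists_contDiff_hasCompactSupport_eventuallyEq hU habU (hF α) (hFR α)
  have he_eq t (ht : t ∈ Set.Icc a b) x : e' (t, x) = e (t, x) :=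
    (hee' (t, x) ⟨ht, trivial⟩).eq_of_nhds
  have hdiv_eq t (ht : t ∈ Set.Icc a b) x :
      spacetimeDiv e' F' (t, x) = spacetimeDiv e F (t, x) := by
    have hp : (t, x) ∈ Set.Icc a b ×ˢ Set.univ := ⟨ht, trivial⟩
    simp only [spacetimeDiv, Dt, Dx, (hee' _ hp).fderiv_eq, (hFF' _ _ hp).fderiv_eq]
  have hflux_eq : graphFlux e' F' φ = graphFlux e F φ := by
    funext x
    have hp : (φ x, x) ∈ Set.Icc a b ×ˢ Set.univ := ⟨hφab x, trivial⟩
    simp only [graphFlux, (hee' _ hp).eq_of_nhds, (hFF' _ _ hp).eq_of_nhds]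
  rw [← hflux_eq, ← funext (he_eq s hs)]
  refine ⟨integrable_graphFlux he'.continuous hec' (fun α => (hF' α).continuous) hFc' hφ,
    integral_graphFlux_le_of_contDiff he' hec' hF' hFc' hK (fun t ht => ?_) hh hh₀
      (fun t ht => ?_) hφ hφab hs⟩
  · simpa only [he_eq t ht] using he₀ t ht
  · simpa only [he_eq t ht, hdiv_eq t ht] using hdiv t ht

end GraphEstimate

section SquareIntegrable

variable {X : Type*} [MeasurableSpace X] {μ : Measure X} {w f e d : X → ℝ} {K : ℝ}

lemma integral_abs_mul_abs_le (hw : MemLp w 2 μ) (hf : MemLp f 2 μ) :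
    ∫ x, |w x| * |f x| ∂μ ≤ √(∫ x, w x ^ 2 ∂μ) * (eLpNorm f 2 μ).toReal := by
  have hnorm : (eLpNorm f 2 μ).toReal = (∫ x, |f x| ^ (2 : ℝ) ∂μ) ^ (1 / 2 : ℝ) := by
    rw [hf.eLpNorm_eq_integral_rpow_norm two_ne_zero ENNReal.ofNat_ne_top,
      ENNReal.toReal_ofReal (by positivity)]
    simp
  have hholder := integral_mul_le_Lp_mul_Lq_of_nonneg (μ := μ) Real.HolderConjugate.two_two
    (.of_forall fun x => abs_nonneg (w x)) (.of_forall fun x => abs_nonneg (f x))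
    (by simpa using! hw.abs) (by simpa using! hf.abs)
  simpa only [hnorm, Real.sqrt_eq_rpow, Real.rpow_two, sq_abs] using hholder

lemma integral_abs_le_of_abs_le_mul_add (he : Integrable e μ) (hw : AEStronglyMeasurable w μ)
    (hwe : ∀ x, w x ^ 2 ≤ e x) (hf : MemLp f 2 μ)
    (hd : ∀ x, |d x| ≤ K * e x + 2 * (|w x| * |f x|)) :
    ∫ x, |d x| ∂μ
      ≤ K * (∫ x, e x ∂μ) + 2 * √(∫ x, e x ∂μ) * (eLpNorm f 2 μ).toReal := by
  have hw2 : Integrable (fun x => w x ^ 2) μ :=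
    he.mono' (hw.pow 2) (.of_forall fun x => by simpa using! hwe x)
  have hwLp : MemLp w 2 μ := (memLp_two_iff_integrable_sq hw).2 hw2
  have hwf : Integrable (fun x => |w x| * |f x|) μ := hwLp.abs.integrable_mul hf.abs
  calc ∫ x, |d x| ∂μ
      ≤ ∫ x, (K * e x + 2 * (|w x| * |f x|)) ∂μ :=
        integral_mono_of_nonneg (.of_forall fun x => abs_nonneg _)
          ((he.const_mul K).add (hwf.const_mul 2)) (.of_forall hd)
    _ = K * (∫ x, e x ∂μ) + 2 * ∫ x, |w x| * |f x| ∂μ := by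
        rw [integral_add (he.const_mul K) (hwf.const_mul 2), integral_const_mul,
          integral_const_mul]
    _ ≤ K * (∫ x, e x ∂μ) + 2 * (√(∫ x, e x ∂μ) * (eLpNorm f 2 μ).toReal) := by
        gcongr
        refine (integral_abs_mul_abs_le hwLp hf).trans ?_
        gcongr
        exact hwe
    _ = _ := by ring

end SquareIntegrable

section QuadraticForm

variable {ι : Type*} [Fintype ι] {B : ℝ}

lemma two_mul_abs_mul_sum_le {m : ι → ℝ} (hm : ∀ i, |m i| ≤ B) (w : ℝ) (y : ι → ℝ) :
    2 * |w * ∑ i, m i * y i| ≤ B * (Fintype.card ι * w ^ 2 + ∑ i, y i ^ 2) := by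
  have hterm i : 2 * |w * (m i * y i)| ≤ B * (w ^ 2 + y i ^ 2) := by
    have hyoung : 2 * (|w| * |y i|) ≤ w ^ 2 + y i ^ 2 := by
      simpa [mul_assoc] using! two_mul_le_add_sq |w| |y i|
    calc 2 * |w * (m i * y i)| = |m i| * (2 * (|w| * |y i|)) := by
          rw [abs_mul, abs_mul]
          ring
      _ ≤ B * (w ^ 2 + y i ^ 2) :=
          mul_le_mul (hm i) hyoung (by positivity) ((abs_nonneg _).trans (hm i))
  calc 2 * |w * ∑ i, m i * y i| ≤ 2 * ∑ i, |w * (m i * y i)| := by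
        rw [Finset.mul_sum]
        gcongr
        exact Finset.abs_sum_le_sum_abs _ _
    _ = ∑ i, 2 * |w * (m i * y i)| := Finset.mul_sum _ _ _
    _ ≤ ∑ i, B * (w ^ 2 + y i ^ 2) := Finset.sum_le_sum fun i _ => hterm i
    _ = B * (Fintype.card ι * w ^ 2 + ∑ i, y i ^ 2) := by
        simp [← Finset.mul_sum, Finset.sum_add_distrib]

lemma abs_sum_sum_mul_mul_le {m : ι → ι → ℝ} (hm : ∀ i j, |m i j| ≤ B) (y : ι → ℝ) :
    |∑ i, ∑ j, m i j * y i * y j| ≤ B * Fintype.card ι * ∑ i, y i ^ 2 := by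
  have hrow i : |∑ j, m i j * y i * y j|
      ≤ B * (Fintype.card ι * y i ^ 2 + ∑ j, y j ^ 2) / 2 := by
    have hcomm : ∑ j, m i j * y i * y j = y i * ∑ j, m i j * y j := by
      rw [Finset.mul_sum]
      exact Finset.sum_congr rfl fun j _ => by ring
    rw [hcomm, le_div_iff₀' two_pos]
    exact two_mul_abs_mul_sum_le (hm i) (y i) y
  refine (Finset.abs_sum_le_sum_abs _ _).trans
    ((Finset.sum_le_sum fun i _ => hrow i).trans_eq ?_)
  simp only [← Finset.sum_div, ← Finset.mul_sum, Finset.sum_add_distrib, Finset.sum_const,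
    Finset.card_univ, nsmul_eq_mul]
  ring

lemma sum_sum_mul_comm {m : ι → ι → ℝ} (hm : ∀ i j, m i j = m j i) (y z : ι → ℝ) :
    ∑ i, ∑ j, m i j * y i * z j = ∑ i, ∑ j, m i j * z i * y j := by
  rw [Finset.sum_comm]
  exact Finset.sum_congr rfl fun i _ => Finset.sum_congr rfl fun j _ => by rw [hm]; ring

lemma sum_sum_mul_smul_add {m : ι → ι → ℝ} (hm : ∀ i j, m i j = m j i) (w : ℝ) (z y : ι → ℝ) :
    ∑ i, ∑ j, m i j * (w * z i + y i) * (w * z j + y j)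
      = w ^ 2 * (∑ i, ∑ j, m i j * z i * z j) + 2 * w * (∑ i, ∑ j, m i j * z i * y j)
        + ∑ i, ∑ j, m i j * y i * y j := by
  have hexpand i j : m i j * (w * z i + y i) * (w * z j + y j)
      = w ^ 2 * (m i j * z i * z j) + w * (m i j * z i * y j) + w * (m i j * y i * z j)
        + m i j * y i * y j := by ring
  simp only [hexpand, Finset.sum_add_distrib, ← Finset.mul_sum, sum_sum_mul_comm hm y z]
  ring

end QuadraticForm

section WaveEnergy

variable {n : ℕ}

/-- The density of `energy g v`. -/
noncomputable def energyDensity (g : Fin n → Fin n → ℝ × (Fin n → ℝ) → ℝ)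
    (v : ℝ × (Fin n → ℝ) → ℝ) (p : ℝ × (Fin n → ℝ)) : ℝ :=
  Dt v p ^ 2 + (∑ α, ∑ β, g α β p * Dx α v p * Dx β v p) + v p ^ 2

/-- The spatial flux of energy: together with `energyDensity g v` it forms a vector field on
`ℝ × ℝⁿ` whose divergence contains no second derivative of `v` other than `waveOp g v`. -/
noncomputable def energyFlux (g : Fin n → Fin n → ℝ × (Fin n → ℝ) → ℝ)
    (v : ℝ × (Fin n → ℝ) → ℝ) (α : Fin n) (p : ℝ × (Fin n → ℝ)) : ℝ :=
  -2 * Dt v p * ∑ β, g α β p * Dx β v p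

/-- The principal part `∂_t² v - Σ g^{αβ} ∂_α ∂_β v` of the wave equation. -/
noncomputable def waveOp (g : Fin n → Fin n → ℝ × (Fin n → ℝ) → ℝ)
    (v : ℝ × (Fin n → ℝ) → ℝ) (p : ℝ × (Fin n → ℝ)) : ℝ :=
  Dt (Dt v) p - ∑ α, ∑ β, g α β p * Dx α (Dx β v) p

variable {g : Fin n → Fin n → ℝ × (Fin n → ℝ) → ℝ} {v : ℝ × (Fin n → ℝ) → ℝ}
  {p : ℝ × (Fin n → ℝ)} {C₁ M R : ℝ}

lemma contDiffAt_Dt (hv : ContDiffAt ℝ 2 v p) : ContDiffAt ℝ 1 (Dt v) p :=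
  (hv.fderiv_right (m := 1) le_rfl).clm_apply contDiffAt_const

lemma contDiffAt_Dx (hv : ContDiffAt ℝ 2 v p) (α : Fin n) : ContDiffAt ℝ 1 (Dx α v) p :=
  (hv.fderiv_right (m := 1) le_rfl).clm_apply contDiffAt_const

lemma Dt_Dx_comm (hv : ContDiffAt ℝ 2 v p) (α : Fin n) : Dt (Dx α v) p = Dx α (Dt v) p := by
  have hv' : DifferentiableAt ℝ (fderiv ℝ v) p :=
    (hv.fderiv_right (m := 1) le_rfl).differentiableAt one_ne_zero
  have hsymm : IsSymmSndFDerivAt ℝ v p := hv.isSymmSndFDerivAt (by simp)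
  have hsnd (d d' : ℝ × (Fin n → ℝ)) :
      fderiv ℝ (fun q => fderiv ℝ v q d) p d' = fderiv ℝ (fderiv ℝ v) p d' d := by
    simp [fderiv_clm_apply hv' (differentiableAt_const d)]
  exact (hsnd _ _).trans ((hsymm _ _).trans (hsnd _ _).symm)

lemma contDiffAt_energyDensity (hg : ∀ α β, ContDiffAt ℝ 1 (g α β) p)
    (hv : ContDiffAt ℝ 2 v p) : ContDiffAt ℝ 1 (energyDensity g v) p := by
  have hquad : ContDiffAt ℝ 1 (fun q => ∑ α, ∑ β, g α β q * Dx α v q * Dx β v q) p :=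
    .sum fun α _ => .sum fun β _ => ((hg α β).mul (contDiffAt_Dx hv α)).mul (contDiffAt_Dx hv β)
  exact (((contDiffAt_Dt hv).pow 2).add hquad).add ((hv.of_le one_le_two).pow 2)

lemma contDiffAt_energyFlux (hg : ∀ α β, ContDiffAt ℝ 1 (g α β) p)
    (hv : ContDiffAt ℝ 2 v p) (α : Fin n) : ContDiffAt ℝ 1 (energyFlux g v α) p :=
  (contDiffAt_const.mul (contDiffAt_Dt hv)).mul
    (.sum fun β _ => (hg α β).mul (contDiffAt_Dx hv β))

lemma Dt_energyDensity (hg : ∀ α β, DifferentiableAt ℝ (g α β) p)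
    (hsymm : ∀ α β, g α β p = g β α p) (hv : ContDiffAt ℝ 2 v p) :
    Dt (energyDensity g v) p = 2 * Dt v p * (Dt (Dt v) p + v p)
      + (∑ α, ∑ β, Dt (g α β) p * Dx α v p * Dx β v p)
      + 2 * ∑ α, ∑ β, g α β p * Dx α (Dt v) p * Dx β v p := by
  have hDt := ((contDiffAt_Dt hv).differentiableAt one_ne_zero).hasFDerivAt
  have hDx α := ((contDiffAt_Dx hv α).differentiableAt one_ne_zero).hasFDerivAt
  have hquad : HasFDerivAt (fun q => ∑ α, ∑ β, g α β q * Dx α v q * Dx β v q) _ p :=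
    .fun_sum fun α _ => .fun_sum fun β _ => ((hg α β).hasFDerivAt.mul (hDx α)).mul (hDx β)
  have he := ((hDt.pow 2).fun_add hquad).fun_add
    ((hv.differentiableAt two_ne_zero).hasFDerivAt.pow 2)
  have hterm α β : g α β p * Dx α v p * Dt (Dx β v) p + Dx β v p *
      (g α β p * Dt (Dx α v) p + Dx α v p * Dt (g α β) p)
      = Dt (g α β) p * Dx α v p * Dx β v p
        + (g α β p * Dx α v p * Dt (Dx β v) p + g α β p * Dt (Dx α v) p * Dx β v p) := by ring
  have hexpand : Dt (energyDensity g v) p = 2 * Dt v p * Dt (Dt v) p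
      + (∑ α, ∑ β, (g α β p * Dx α v p * Dt (Dx β v) p + Dx β v p *
          (g α β p * Dt (Dx α v) p + Dx α v p * Dt (g α β) p)))
      + 2 * v p * Dt v p := by
    refine (congrArg (· (1, 0)) he.fderiv).trans ?_
    simp [Dt, Dx, mul_add]
  rw [hexpand]
  simp only [hterm, Finset.sum_add_distrib, sum_sum_mul_comm hsymm (fun α => Dx α v p)]
  simp only [Dt_Dx_comm hv]
  ring

lemma Dx_energyFlux (hg : ∀ α β, DifferentiableAt ℝ (g α β) p) (hv : ContDiffAt ℝ 2 v p)
    (α : Fin n) :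
    Dx α (energyFlux g v α) p = -2 * ((∑ β, g α β p * Dx α (Dt v) p * Dx β v p)
      + Dt v p * ((∑ β, Dx α (g α β) p * Dx β v p) + ∑ β, g α β p * Dx α (Dx β v) p)) := by
  have hDt := ((contDiffAt_Dt hv).differentiableAt one_ne_zero).hasFDerivAt
  have hDx β := ((contDiffAt_Dx hv β).differentiableAt one_ne_zero).hasFDerivAt
  have hsum : HasFDerivAt (fun q => ∑ β, g α β q * Dx β v q) _ p :=
    .fun_sum fun β _ => (hg α β).hasFDerivAt.mul (hDx β)
  have hterm β : g α β p * Dx α (Dt v) p * Dx β v p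
      = Dx α (Dt v) p * (g α β p * Dx β v p) := by ring
  have hexpand : Dx α (energyFlux g v α) p
      = -2 * Dt v p * (∑ β, (g α β p * Dx α (Dx β v) p + Dx β v p * Dx α (g α β) p))
        + (∑ β, g α β p * Dx β v p) * (-2 * Dx α (Dt v) p) := by
    refine (congrArg (· (0, Pi.single α 1)) ((hDt.const_mul (-2)).mul hsum).fderiv).trans ?_
    simp [Dt, Dx]
  simp only [hexpand, hterm, Finset.sum_add_distrib, ← Finset.mul_sum, mul_comm (Dx _ v p)]
  ring

theorem spacetimeDiv_energy (hg : ∀ α β, DifferentiableAt ℝ (g α β) p)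
    (hsymm : ∀ α β, g α β p = g β α p) (hv : ContDiffAt ℝ 2 v p) :
    spacetimeDiv (energyDensity g v) (energyFlux g v) p
      = 2 * Dt v p * (waveOp g v p + v p - ∑ β, (∑ α, Dx α (g α β) p) * Dx β v p)
        + ∑ α, ∑ β, Dt (g α β) p * Dx α v p * Dx β v p := by
  have hswap : ∑ β, (∑ α, Dx α (g α β) p) * Dx β v p = ∑ α, ∑ β, Dx α (g α β) p * Dx β v p := by
    simp only [Finset.sum_mul]
    exact Finset.sum_comm
  simp only [spacetimeDiv, Dt_energyDensity hg hsymm hv, Dx_energyFlux hg hv, waveOp, hswap,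
    ← Finset.mul_sum, Finset.sum_add_distrib]
  ring

lemma Dt_sq_le_energyDensity (hC₁ : 0 < C₁)
    (hell : ∀ ξ : Fin n → ℝ, C₁ * ∑ α, ξ α ^ 2 ≤ ∑ α, ∑ β, g α β p * ξ α * ξ β) :
    Dt v p ^ 2 ≤ energyDensity g v p := by
  have hquad : 0 ≤ ∑ α, ∑ β, g α β p * Dx α v p * Dx β v p :=
    le_trans (by positivity) (hell fun α => Dx α v p)
  unfold energyDensity
  linarith [sq_nonneg (v p)]

lemma spacetimeDiv_energy_of_waveOp_add_eq (hg : ∀ α β, DifferentiableAt ℝ (g α β) p)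
    (hsymm : ∀ α β, g α β p = g β α p) (hv : ContDiffAt ℝ 2 v p) {b0 c f : ℝ} {b : Fin n → ℝ}
    (heq : waveOp g v p + b0 * Dt v p + (∑ α, b α * Dx α v p) + c * v p = f) :
    spacetimeDiv (energyDensity g v) (energyFlux g v) p
      = 2 * (Dt v p * f) - 2 * (b0 * Dt v p ^ 2) - 2 * ((c - 1) * (Dt v p * v p))
        - 2 * (Dt v p * ∑ β, (b β + ∑ α, Dx α (g α β) p) * Dx β v p)
        + ∑ α, ∑ β, Dt (g α β) p * Dx α v p * Dx β v p := by
  simp only [spacetimeDiv_energy hg hsymm hv, ← heq, add_mul, Finset.sum_add_distrib]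
  ring

lemma abs_spacetimeDiv_energy_le_of_bounds (hg : ∀ α β, DifferentiableAt ℝ (g α β) p)
    (hsymm : ∀ α β, g α β p = g β α p)
    (hgM : ∀ α β, |Dt (g α β) p| ≤ M ∧ ∀ μ, |Dx μ (g α β) p| ≤ M)
    (hv : ContDiffAt ℝ 2 v p) {b0 c f : ℝ} {b : Fin n → ℝ}
    (hbc : |b0| ≤ M ∧ (∀ α, |b α| ≤ M) ∧ |c| ≤ M)
    (heq : waveOp g v p + b0 * Dt v p + (∑ α, b α * Dx α v p) + c * v p = f) :
    |spacetimeDiv (energyDensity g v) (energyFlux g v) p|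
      ≤ 2 * (|Dt v p| * |f|) + (M * (3 + n + n ^ 2) + 1) * Dt v p ^ 2 + (M + 1) * v p ^ 2
        + M * (1 + 2 * n) * ∑ α, Dx α v p ^ 2 := by
  obtain ⟨hb0, hb, hc⟩ := hbc
  rw [spacetimeDiv_energy_of_waveOp_add_eq hg hsymm hv heq]
  have hm β : |b β + ∑ α, Dx α (g α β) p| ≤ M * (1 + n) :=
    calc |b β + ∑ α, Dx α (g α β) p| ≤ |b β| + ∑ α, |Dx α (g α β) p| :=
          (abs_add_le _ _).trans (by gcongr; exact Finset.abs_sum_le_sum_abs _ _)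
      _ ≤ M + ∑ _α : Fin n, M := by
          gcongr with α
          exacts [hb β, (hgM α β).2 α]
      _ = M * (1 + n) := by simp; ring
  have hsource : |2 * (Dt v p * f)| = 2 * (|Dt v p| * |f|) := by
    rw [abs_mul, abs_mul, abs_two]
  have hdamping : |2 * (b0 * Dt v p ^ 2)| ≤ 2 * (M * Dt v p ^ 2) := by
    rw [abs_mul, abs_mul, abs_two, abs_sq]
    gcongr
  have hpotential : |2 * ((c - 1) * (Dt v p * v p))| ≤ (M + 1) * (Dt v p ^ 2 + v p ^ 2) := by
    have hc' : |c - 1| ≤ M + 1 := (abs_sub c 1).trans (by rw [abs_one]; gcongr)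
    have hyoung : 2 * |Dt v p * v p| ≤ Dt v p ^ 2 + v p ^ 2 := by
      simpa [abs_mul, mul_assoc] using! two_mul_le_add_sq |Dt v p| |v p|
    rw [abs_mul, abs_mul, abs_two, mul_left_comm]
    gcongr
    exact (abs_nonneg _).trans hc'
  have hdrift := two_mul_abs_mul_sum_le hm (Dt v p) (Dx · v p)
  have hmetric := abs_sum_sum_mul_mul_le (fun α β => (hgM α β).1) (Dx · v p)
  rw [Fintype.card_fin] at hdrift hmetric
  rw [← abs_two, ← abs_mul] at hdrift
  have htriangle (x₁ x₂ x₃ x₄ x₅ : ℝ) :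
      |x₁ - x₂ - x₃ - x₄ + x₅| ≤ |x₁| + |x₂| + |x₃| + |x₄| + |x₅| := by
    grind
  refine (htriangle _ _ _ _ _).trans ?_
  linarith

/-- A bound for the growth rate of the energy when `g ≥ C₁` and the coefficients of the equation
and the first derivatives of `g` are at most `M`. -/
noncomputable def energyRate (n : ℕ) (C₁ M : ℝ) : ℝ :=
  M * (3 + n + n ^ 2) + 1 + M * (1 + 2 * n) / C₁

lemma energyRate_nonneg (n : ℕ) (hC₁ : 0 < C₁) (hM : 0 ≤ M) : 0 ≤ energyRate n C₁ M := by
  unfold energyRate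
  positivity

theorem abs_spacetimeDiv_energy_le (hC₁ : 0 < C₁) (hM : 0 ≤ M)
    (hg : ∀ α β, DifferentiableAt ℝ (g α β) p) (hsymm : ∀ α β, g α β p = g β α p)
    (hell : ∀ ξ : Fin n → ℝ, C₁ * ∑ α, ξ α ^ 2 ≤ ∑ α, ∑ β, g α β p * ξ α * ξ β)
    (hgM : ∀ α β, |Dt (g α β) p| ≤ M ∧ ∀ μ, |Dx μ (g α β) p| ≤ M)
    (hv : ContDiffAt ℝ 2 v p) {b0 c f : ℝ} {b : Fin n → ℝ}
    (hbc : |b0| ≤ M ∧ (∀ α, |b α| ≤ M) ∧ |c| ≤ M)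
    (heq : waveOp g v p + b0 * Dt v p + (∑ α, b α * Dx α v p) + c * v p = f) :
    |spacetimeDiv (energyDensity g v) (energyFlux g v) p|
      ≤ energyRate n C₁ M * energyDensity g v p + 2 * (|Dt v p| * |f|) := by
  refine (abs_spacetimeDiv_energy_le_of_bounds hg hsymm hgM hv hbc heq).trans ?_
  set Q := ∑ α, ∑ β, g α β p * Dx α v p * Dx β v p with hQ
  have hsum : ∑ α, Dx α v p ^ 2 ≤ Q / C₁ := (le_div_iff₀' hC₁).2 (hell (Dx · v p))
  have hQ₀ : 0 ≤ Q := le_trans (by positivity) (hell (Dx · v p))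
  have htime : M * (3 + n + n ^ 2) + 1 ≤ energyRate n C₁ M :=
    le_add_of_nonneg_right (by positivity)
  have hzero : M + 1 ≤ energyRate n C₁ M := by
    refine le_trans ?_ htime
    gcongr
    exact le_mul_of_one_le_right hM (by linarith [n.cast_nonneg (α := ℝ), sq_nonneg (n : ℝ)])
  have hspace : M * (1 + 2 * n) / C₁ ≤ energyRate n C₁ M :=
    le_add_of_nonneg_left (by positivity)
  calc 2 * (|Dt v p| * |f|) + (M * (3 + n + n ^ 2) + 1) * Dt v p ^ 2 + (M + 1) * v p ^ 2
        + M * (1 + 2 * n) * ∑ α, Dx α v p ^ 2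
      ≤ 2 * (|Dt v p| * |f|) + (M * (3 + n + n ^ 2) + 1) * Dt v p ^ 2 + (M + 1) * v p ^ 2
        + M * (1 + 2 * n) * (Q / C₁) := by gcongr
    _ = 2 * (|Dt v p| * |f|) + (M * (3 + n + n ^ 2) + 1) * Dt v p ^ 2 + (M + 1) * v p ^ 2
        + M * (1 + 2 * n) / C₁ * Q := by ring
    _ ≤ 2 * (|Dt v p| * |f|) + energyRate n C₁ M * Dt v p ^ 2 + energyRate n C₁ M * v p ^ 2
        + energyRate n C₁ M * Q := by gcongr
    _ = energyRate n C₁ M * energyDensity g v p + 2 * (|Dt v p| * |f|) := by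
        rw [energyDensity, ← hQ]
        ring

end WaveEnergy

section TraceEstimate

variable {n : ℕ} {g : Fin n → Fin n → ℝ × (Fin n → ℝ) → ℝ} {v : ℝ × (Fin n → ℝ) → ℝ}
  {φ : (Fin n → ℝ) → ℝ} {x : Fin n → ℝ} {C₁ M R t : ℝ}

lemma graphFlux_energy (hsymm : ∀ α β, g α β (φ x, x) = g β α (φ x, x)) :
    graphFlux (energyDensity g v) (energyFlux g v) φ x
      = v (φ x, x) ^ 2
        + Dt v (φ x, x) ^ 2 * (1 - ∑ α, ∑ β, g α β (φ x, x) * fderiv ℝ φ x (Pi.single α 1)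
            * fderiv ℝ φ x (Pi.single β 1))
        + ∑ α, ∑ β, g α β (φ x, x)
            * (Dt v (φ x, x) * fderiv ℝ φ x (Pi.single α 1) + Dx α v (φ x, x))
            * (Dt v (φ x, x) * fderiv ℝ φ x (Pi.single β 1) + Dx β v (φ x, x)) := by
  have hflux : ∑ α, energyFlux g v α (φ x, x) * fderiv ℝ φ x (Pi.single α 1)
      = -2 * Dt v (φ x, x) * ∑ α, ∑ β, g α β (φ x, x) * fderiv ℝ φ x (Pi.single α 1)
          * Dx β v (φ x, x) := by
    simp only [energyFlux, Finset.mul_sum, Finset.sum_mul]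
    exact Finset.sum_congr rfl fun α _ => Finset.sum_congr rfl fun β _ => by ring
  rw [sum_sum_mul_smul_add hsymm _ _ (Dx · v (φ x, x)), graphFlux, hflux, energyDensity]
  ring

lemma fderiv_comp_graph_single (hv : DifferentiableAt ℝ v (φ x, x)) (hφ : DifferentiableAt ℝ φ x)
    (α : Fin n) :
    fderiv ℝ (fun y => v (φ y, y)) x (Pi.single α 1)
      = Dt v (φ x, x) * fderiv ℝ φ x (Pi.single α 1) + Dx α v (φ x, x) := by
  rw [(hasFDerivAt_comp_graph hv hφ).fderiv]
  rfl

theorem sq_add_sum_sq_fderiv_le_graphFlux (hC₁ : 0 < C₁)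
    (hsymm : ∀ α β, g α β (φ x, x) = g β α (φ x, x))
    (hell : ∀ ξ : Fin n → ℝ, C₁ * ∑ α, ξ α ^ 2 ≤ ∑ α, ∑ β, g α β (φ x, x) * ξ α * ξ β)
    (hv : DifferentiableAt ℝ v (φ x, x)) (hφ : DifferentiableAt ℝ φ x)
    (hspacelike : ∑ α, ∑ β, g α β (φ x, x) * fderiv ℝ φ x (Pi.single α 1)
      * fderiv ℝ φ x (Pi.single β 1) ≤ 1) :
    v (φ x, x) ^ 2 + ∑ α, fderiv ℝ (fun y => v (φ y, y)) x (Pi.single α 1) ^ 2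
      ≤ (1 + 1 / C₁) * graphFlux (energyDensity g v) (energyFlux g v) φ x := by
  simp only [fderiv_comp_graph_single hv hφ]
  set y := fun α => Dt v (φ x, x) * fderiv ℝ φ x (Pi.single α 1) + Dx α v (φ x, x)
  have hlower : v (φ x, x) ^ 2 + C₁ * ∑ α, y α ^ 2
      ≤ graphFlux (energyDensity g v) (energyFlux g v) φ x := by
    rw [graphFlux_energy hsymm]
    have hnormal := mul_nonneg (sq_nonneg (Dt v (φ x, x))) (sub_nonneg.2 hspacelike)
    linarith [hell y]
  calc v (φ x, x) ^ 2 + ∑ α, y α ^ 2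
      ≤ (1 + 1 / C₁) * (v (φ x, x) ^ 2 + C₁ * ∑ α, y α ^ 2) := by
        have hexpand : (1 + 1 / C₁) * (v (φ x, x) ^ 2 + C₁ * ∑ α, y α ^ 2)
            = v (φ x, x) ^ 2 + ∑ α, y α ^ 2
              + (1 / C₁ * v (φ x, x) ^ 2 + C₁ * ∑ α, y α ^ 2) := by
          field_simp
          ring
        rw [hexpand]
        exact le_add_of_nonneg_right (by positivity)
    _ ≤ _ := by gcongr

theorem integral_sq_add_sum_sq_fderiv_le (hC₁ : 0 < C₁)
    (hsymm : ∀ α β x, g α β (φ x, x) = g β α (φ x, x))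
    (hell : ∀ x, ∀ ξ : Fin n → ℝ,
      C₁ * ∑ α, ξ α ^ 2 ≤ ∑ α, ∑ β, g α β (φ x, x) * ξ α * ξ β)
    (hv : ∀ x, DifferentiableAt ℝ v (φ x, x)) {L : NNReal} (hφ : LipschitzWith L φ)
    (hspacelike : ∀ᵐ x, ∑ α, ∑ β, g α β (φ x, x) * fderiv ℝ φ x (Pi.single α 1)
      * fderiv ℝ φ x (Pi.single β 1) ≤ 1)
    (hflux : Integrable (graphFlux (energyDensity g v) (energyFlux g v) φ)) :
    ∫ x, (v (φ x, x) ^ 2 + ∑ α, fderiv ℝ (fun y => v (φ y, y)) x (Pi.single α 1) ^ 2)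
      ≤ (1 + 1 / C₁) * ∫ x, graphFlux (energyDensity g v) (energyFlux g v) φ x := by
  rw [← integral_const_mul]
  refine integral_mono_of_nonneg (.of_forall fun x => by positivity) (hflux.const_mul _) ?_
  filter_upwards [hspacelike, hφ.ae_differentiableAt] with x hx hφx
  exact sq_add_sum_sq_fderiv_le_graphFlux hC₁ (hsymm · · x) (hell x) (hv x) hφx hx

lemma fderiv_eq_zero_of_forall_lt_norm {u : ℝ × (Fin n → ℝ) → ℝ}
    (hu : ∀ t x, R < ‖x‖ → u (t, x) = 0) (t : ℝ) {x : Fin n → ℝ} (hx : R < ‖x‖) :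
    fderiv ℝ u (t, x) = 0 := by
  have hzero : u =ᶠ[nhds (t, x)] fun _ => 0 := by
    filter_upwards [(continuous_snd.norm.isOpen_preimage _ isOpen_Ioi).mem_nhds hx] with q hq
    exact hu q.1 q.2 hq
  rw [hzero.fderiv_eq, fderiv_fun_const, Pi.zero_apply]

lemma energyDensity_eq_zero (hvR : ∀ t x, R < ‖x‖ → v (t, x) = 0) (t : ℝ) {x : Fin n → ℝ}
    (hx : R < ‖x‖) : energyDensity g v (t, x) = 0 := by
  simp [energyDensity, Dt, Dx, fderiv_eq_zero_of_forall_lt_norm hvR t hx, hvR t x hx]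

lemma energyFlux_eq_zero (hvR : ∀ t x, R < ‖x‖ → v (t, x) = 0) (α : Fin n) (t : ℝ)
    {x : Fin n → ℝ} (hx : R < ‖x‖) : energyFlux g v α (t, x) = 0 := by
  simp [energyFlux, Dt, fderiv_eq_zero_of_forall_lt_norm hvR t hx]

lemma waveOp_eq_zero (hvR : ∀ t x, R < ‖x‖ → v (t, x) = 0) (t : ℝ) {x : Fin n → ℝ}
    (hx : R < ‖x‖) : waveOp g v (t, x) = 0 := by
  have hD d : fderiv ℝ (fun q => fderiv ℝ v q d) (t, x) = 0 :=
    fderiv_eq_zero_of_forall_lt_norm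
      (fun t x hx => by rw [fderiv_eq_zero_of_forall_lt_norm hvR t hx]; rfl) t hx
  have hDt : fderiv ℝ (Dt v) (t, x) = 0 := hD _
  have hDx β : fderiv ℝ (Dx β v) (t, x) = 0 := hD _
  simp [waveOp, Dt, Dx, hDt, hDx]

lemma memLp_source_slice (hvR : ∀ t x, R < ‖x‖ → v (t, x) = 0) {b0 c f : (Fin n → ℝ) → ℝ}
    {b : Fin n → (Fin n → ℝ) → ℝ} (hf : Continuous f)
    (heq : ∀ x, waveOp g v (t, x) + b0 x * Dt v (t, x) + (∑ α, b α x * Dx α v (t, x))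
      + c x * v (t, x) = f x) :
    MemLp f 2 :=
  hf.memLp_of_hasCompactSupport <| hasCompactSupport_of_forall_lt_norm (R := R) fun x hx => by
    simp [← heq, waveOp_eq_zero hvR t hx, Dt, Dx, fderiv_eq_zero_of_forall_lt_norm hvR t hx,
      hvR t x hx]

lemma integrable_energyDensity_slice (hg : ∀ α β x, ContDiffAt ℝ 1 (g α β) (t, x))
    (hv : ∀ x, ContDiffAt ℝ 2 v (t, x)) (hvR : ∀ t x, R < ‖x‖ → v (t, x) = 0) :
    Integrable fun x => energyDensity g v (t, x) := by
  have hcont : Continuous fun x => energyDensity g v (t, x) :=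
    continuous_iff_continuousAt.2 fun x =>
      (contDiffAt_energyDensity (fun α β => hg α β x) (hv x)).continuousAt.comp
        (f := fun x => (t, x)) (by fun_prop)
  exact hcont.integrable_of_hasCompactSupport
    (hasCompactSupport_of_forall_lt_norm fun x hx => energyDensity_eq_zero hvR t hx)

theorem integral_abs_spacetimeDiv_energy_le (hC₁ : 0 < C₁) (hM : 0 ≤ M)
    (hg : ∀ α β x, ContDiffAt ℝ 1 (g α β) (t, x)) (hsymm : ∀ α β x, g α β (t, x) = g β α (t, x))
    (hell : ∀ x, ∀ ξ : Fin n → ℝ, C₁ * ∑ α, ξ α ^ 2 ≤ ∑ α, ∑ β, g α β (t, x) * ξ α * ξ β)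
    (hgM : ∀ α β x, |Dt (g α β) (t, x)| ≤ M ∧ ∀ μ, |Dx μ (g α β) (t, x)| ≤ M)
    (hv : ∀ x, ContDiffAt ℝ 2 v (t, x)) (hvR : ∀ t x, R < ‖x‖ → v (t, x) = 0)
    {b0 c f : (Fin n → ℝ) → ℝ} {b : Fin n → (Fin n → ℝ) → ℝ}
    (hbc : ∀ x, |b0 x| ≤ M ∧ (∀ α, |b α x| ≤ M) ∧ |c x| ≤ M) (hf : MemLp f 2)
    (heq : ∀ x, waveOp g v (t, x) + b0 x * Dt v (t, x) + (∑ α, b α x * Dx α v (t, x))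
      + c x * v (t, x) = f x) :
    ∫ x, |spacetimeDiv (energyDensity g v) (energyFlux g v) (t, x)|
      ≤ energyRate n C₁ M * energy g v t
        + 2 * √(energy g v t) * (eLpNorm f 2 volume).toReal := by
  have hDt : Continuous fun x => Dt v (t, x) := continuous_iff_continuousAt.2 fun x =>
    (contDiffAt_Dt (hv x)).continuousAt.comp (f := fun x => (t, x)) (by fun_prop)
  exact integral_abs_le_of_abs_le_mul_add (integrable_energyDensity_slice hg hv hvR)
    hDt.aestronglyMeasurable (fun x => Dt_sq_le_energyDensity hC₁ (hell x)) hf fun x =>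
      abs_spacetimeDiv_energy_le hC₁ hM (fun α β => (hg α β x).differentiableAt one_ne_zero)
        (fun α β => hsymm α β x) (hell x) (fun α β => hgM α β x) (hv x) (hbc x) (heq x)

end TraceEstimate

theorem stmt_10_general {n : ℕ} {T₀ T₁ C₁ M R s : ℝ} (hC₁ : 0 < C₁) (hM : 0 ≤ M)
    {U : Set (ℝ × (Fin n → ℝ))} (hU : IsOpen U) (hTU : Set.Icc T₀ T₁ ×ˢ Set.univ ⊆ U)
    {g : Fin n → Fin n → ℝ × (Fin n → ℝ) → ℝ} (hg : ∀ α β, ContDiffOn ℝ 1 (g α β) U)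
    (hsymm : ∀ α β, ∀ p ∈ Set.Icc T₀ T₁ ×ˢ Set.univ, g α β p = g β α p)
    (hell : ∀ p ∈ Set.Icc T₀ T₁ ×ˢ Set.univ, ∀ ξ : Fin n → ℝ,
      C₁ * ∑ α, ξ α ^ 2 ≤ ∑ α, ∑ β, g α β p * ξ α * ξ β)
    (hgM : ∀ α β, ∀ p ∈ Set.Icc T₀ T₁ ×ˢ Set.univ, |Dt (g α β) p| ≤ M ∧ ∀ μ, |Dx μ (g α β) p| ≤ M)
    {b0 c f : ℝ × (Fin n → ℝ) → ℝ} {b : Fin n → ℝ × (Fin n → ℝ) → ℝ}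
    (hbc : ∀ p ∈ Set.Icc T₀ T₁ ×ˢ Set.univ, |b0 p| ≤ M ∧ (∀ α, |b α p| ≤ M) ∧ |c p| ≤ M)
    (hf : ∀ t ∈ Set.Icc T₀ T₁, MemLp (fun x => f (t, x)) 2)
    (hfi : IntegrableOn (fun t => (eLpNorm (fun x => f (t, x)) 2 volume).toReal) (Set.Icc T₀ T₁))
    {φ : (Fin n → ℝ) → ℝ} {L : NNReal} (hφ : LipschitzWith L φ)
    (hφT : ∀ x, φ x ∈ Set.Icc T₀ T₁)
    (hspacelike : ∀ᵐ x, ∑ α, ∑ β, g α β (φ x, x) * fderiv ℝ φ x (Pi.single α 1)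
      * fderiv ℝ φ x (Pi.single β 1) ≤ 1)
    {v : ℝ × (Fin n → ℝ) → ℝ} (hv : ContDiffOn ℝ 2 v U)
    (hvR : ∀ t x, R < ‖x‖ → v (t, x) = 0)
    (heq : ∀ p ∈ Set.Icc T₀ T₁ ×ˢ Set.univ,
      waveOp g v p + b0 p * Dt v p + (∑ α, b α p * Dx α v p) + c p * v p = f p)
    (hs : s ∈ Set.Icc T₀ T₁) :
    ∫ x, (v (φ x, x) ^ 2 + ∑ α, fderiv ℝ (fun y => v (φ y, y)) x (Pi.single α 1) ^ 2)
      ≤ (1 + 1 / C₁) * graphFactor (energyRate n C₁ M * (T₁ - T₀))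
        * (energy g v s
          + (∫ t in Set.Icc T₀ T₁, (eLpNorm (fun x => f (t, x)) 2 volume).toReal) ^ 2) := by
  have hslab {t} (ht : t ∈ Set.Icc T₀ T₁) (x : Fin n → ℝ) :
      (t, x) ∈ Set.Icc T₀ T₁ ×ˢ Set.univ := ⟨ht, trivial⟩
  have hUp p (hp : p ∈ U) : U ∈ nhds p := hU.mem_nhds hp
  have hv_at p (hp : p ∈ U) : ContDiffAt ℝ 2 v p := hv.contDiffAt (hUp p hp)
  have hg_at α β p (hp : p ∈ U) : ContDiffAt ℝ 1 (g α β) p := (hg α β).contDiffAt (hUp p hp)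
  obtain ⟨hint, hle⟩ := integrable_graphFlux_and_integral_le hU hTU
    (fun p hp => (contDiffAt_energyDensity (hg_at · · p hp) (hv_at p hp)).contDiffWithinAt)
    (energyDensity_eq_zero hvR)
    (fun α p hp => (contDiffAt_energyFlux (hg_at · · p hp) (hv_at p hp) α).contDiffWithinAt)
    (energyFlux_eq_zero hvR) (energyRate_nonneg n hC₁ hM)
    (fun t ht => integral_nonneg fun x =>
      (sq_nonneg _).trans (Dt_sq_le_energyDensity hC₁ (hell _ (hslab ht x))))
    hfi (fun _ _ => ENNReal.toReal_nonneg)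
    (fun t ht => integral_abs_spacetimeDiv_energy_le hC₁ hM
      (fun α β x => hg_at α β _ (hTU (hslab ht x))) (fun α β x => hsymm α β _ (hslab ht x))
      (fun x => hell _ (hslab ht x)) (fun α β x => hgM α β _ (hslab ht x))
      (fun x => hv_at _ (hTU (hslab ht x))) hvR (fun x => hbc _ (hslab ht x)) (hf t ht)
      (fun x => heq _ (hslab ht x))) hφ hφT hs
  have htrace := integral_sq_add_sum_sq_fderiv_le hC₁
    (fun α β x => hsymm α β _ (hslab (hφT x) x)) (fun x => hell _ (hslab (hφT x) x))
    (fun x => (hv_at _ (hTU (hslab (hφT x) x))).differentiableAt two_ne_zero) hφ hspacelike hint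
  rw [mul_assoc]
  exact htrace.trans (mul_le_mul_of_nonneg_left hle (by positivity))

/-- Trace estimate on a weakly spacelike Lipschitz graph: the `H¹`
norm of the trace `w(x) = v(φ(x),x)` of a solution on a Lipschitz weakly spacelike
graph hypersurface is controlled by the energy at any time and the source, with a
constant depending only on `n, T, C₁, C₂, M, Λ`. -/
theorem stmt_10 (n : ℕ) (hn : 1 ≤ n) (T C₁ C₂ M Λ : ℝ)
    (hT : 0 < T) (hC₁ : 0 < C₁) (hC₂ : 0 < C₂) (hM : 0 < M) (hΛ : 0 < Λ) :
    ∃ C : ℝ, 0 < C ∧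
      ∀ (U : Set (ℝ × (Fin n → ℝ))), IsOpen U →
        Set.Icc (-T) T ×ˢ (Set.univ : Set (Fin n → ℝ)) ⊆ U →
      ∀ g : Fin n → Fin n → ℝ × (Fin n → ℝ) → ℝ,
        (∀ α β, ContDiffOn ℝ 1 (g α β) U) →
        (∀ α β p, g α β p = g β α p) →
        (∀ p ∈ Set.Icc (-T) T ×ˢ (Set.univ : Set (Fin n → ℝ)), ∀ ξ : Fin n → ℝ,
          C₁ * (∑ α, (ξ α) ^ 2) ≤ (∑ α, ∑ β, g α β p * ξ α * ξ β) ∧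
          (∑ α, ∑ β, g α β p * ξ α * ξ β) ≤ C₂ * (∑ α, (ξ α) ^ 2)) →
        (∀ α β, ∀ p ∈ Set.Icc (-T) T ×ˢ (Set.univ : Set (Fin n → ℝ)),
          |Dt (g α β) p| ≤ M ∧ ∀ μ, |Dx μ (g α β) p| ≤ M) →
      ∀ (b0 : ℝ × (Fin n → ℝ) → ℝ) (b : Fin n → ℝ × (Fin n → ℝ) → ℝ)
        (c : ℝ × (Fin n → ℝ) → ℝ),
        Measurable b0 → (∀ α, Measurable (b α)) → Measurable c →
        (∀ p ∈ Set.Icc (-T) T ×ˢ (Set.univ : Set (Fin n → ℝ)),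
          |b0 p| ≤ M ∧ (∀ α, |b α p| ≤ M) ∧ |c p| ≤ M) →
      ∀ f : ℝ × (Fin n → ℝ) → ℝ, Continuous f →
        IntegrableOn (fun τ => (eLpNorm (fun x => f (τ, x)) 2 volume).toReal)
          (Set.Icc (-T) T) →
      ∀ φ : (Fin n → ℝ) → ℝ, LipschitzWith (Real.toNNReal Λ) φ →
        (∀ x, -T < φ x ∧ φ x < T) →
        (∀ᵐ x : Fin n → ℝ,
          (∑ α, ∑ β, g α β (φ x, x) * fderiv ℝ φ x (Pi.single α 1)
            * fderiv ℝ φ x (Pi.single β 1)) ≤ 1) →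
      ∀ v : ℝ × (Fin n → ℝ) → ℝ, ContDiffOn ℝ 2 v U →
        (∃ R : ℝ, 0 < R ∧ ∀ (t : ℝ) (x : Fin n → ℝ), R ≤ ‖x‖ → v (t, x) = 0) →
        (∀ p ∈ Set.Icc (-T) T ×ˢ (Set.univ : Set (Fin n → ℝ)),
          Dt (Dt v) p - (∑ α, ∑ β, g α β p * Dx α (Dx β v) p)
            + b0 p * Dt v p + (∑ α, b α p * Dx α v p) + c p * v p = f p) →
      ∀ s ∈ Set.Icc (-T) T,
        (∫ x : Fin n → ℝ,
            ((v (φ x, x)) ^ 2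
              + ∑ α, (fderiv ℝ (fun y => v (φ y, y)) x (Pi.single α 1)) ^ 2))
          ≤ C * (energy g v s
              + (∫ τ in (-T)..T, (eLpNorm (fun x => f (τ, x)) 2 volume).toReal) ^ 2) := by
  have hκ : 0 ≤ energyRate n C₁ M * (T - -T) :=
    mul_nonneg (energyRate_nonneg n hC₁ hM.le) (by linarith)
  refine ⟨(1 + 1 / C₁) * graphFactor (energyRate n C₁ M * (T - -T)),
    mul_pos (by positivity) (graphFactor_pos hκ), ?_⟩
  intro U hU hTU g hg hsymm hell hgM b0 b c _ _ _ hbc f hf hfi φ hφ hφT hspacelike v hv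
    ⟨R, _, hvR⟩ heq s hs
  have hvR' t x (hx : R < ‖x‖) : v (t, x) = 0 := hvR t x hx.le
  rw [intervalIntegral.integral_of_le (by linarith), ← integral_Icc_eq_integral_Ioc]
  exact stmt_10_general hC₁ hM.le hU hTU hg (fun α β p _ => hsymm α β p)
    (fun p hp ξ => (hell p hp ξ).1) hgM hbc
    (fun t ht => memLp_source_slice hvR' (by fun_prop) fun x => heq (t, x) ⟨ht, trivial⟩)
    hfi hφ (fun x => ⟨(hφT x).1.le, (hφT x).2.le⟩) hspacelike hv hvR' heq hs
end

section
/- Let n ≥ 1, T ∈ ℝ, let φ : ℝⁿ → ℝ be Lipschitz with φ(x) > −T for every x, and let H : ℝ × ℝⁿ → ℝ be C¹ with compact support. Then the function u : ℝⁿ → ℝ defined by u(x) = ∫_{−T}^{φ(x)} H(t,x) dt is locally Lipschitz, and for almost every x ∈ ℝⁿ, u is differentiable at x with ∂_α u(x) = H(φ(x), x)·∂_αφ(x) + ∫_{−T}^{φ(x)} ∂_α H(t,x) dt for α = 1,…,n, where ∂_αφ denotes the almost-everywhere defined partial derivatives of φ given by Rademacher's theorem. -/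
open MeasureTheory

/-!
The map `(s, x) ↦ ∫ t in a..s, f t x` has the partial derivatives `f s x` in `s`, by the
fundamental theorem of calculus, and `∫ t in a..s, ∂ₓf t x` in `x`, by differentiation under the
integral sign. Both are jointly continuous, so the map is strictly differentiable, hence locally
Lipschitz. Composing it with the graph map `x ↦ (φ x, x)` of a locally Lipschitz `φ` keeps the
Lipschitz property, and the chain rule applies wherever `φ` is differentiable, which is almost
everywhere by Rademacher's theorem.
-/

open Filter Set
open scoped Topology

theorem exists_eventually_forall_mem_norm_le {X Y G : Type*} [TopologicalSpace X]
    [TopologicalSpace Y] [SeminormedAddCommGroup G] {g : X → Y → G}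
    (hg : Continuous g.uncurry) {K : Set X} (hK : IsCompact K) (y₀ : Y) :
    ∃ C, ∀ᶠ y in 𝓝 y₀, ∀ x ∈ K, ‖g x y‖ ≤ C := by
  obtain ⟨C, hC⟩ := hK.exists_bound_of_continuousOn (hg.uncurry_right y₀).continuousOn
  refine ⟨C + 1, hK.eventually_forall_of_forall_eventually fun x hx => ?_⟩
  have hcont : Continuous fun z : Y × X => ‖g z.2 z.1‖ := (hg.comp continuous_swap).norm
  have hlt : ‖g x y₀‖ < C + 1 := (hC x hx).trans_lt (lt_add_one C)
  exact (hcont.tendsto (y₀, x)).eventually_le_const hlt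

theorem ae_differentiableAt_of_locallyLipschitz {E F : Type*} [NormedAddCommGroup E]
    [NormedSpace ℝ E] [FiniteDimensional ℝ E] [MeasurableSpace E] [BorelSpace E]
    [NormedAddCommGroup F] [NormedSpace ℝ F] [FiniteDimensional ℝ F] {φ : E → F}
    (hφ : LocallyLipschitz φ) (μ : Measure E) [μ.IsAddHaarMeasure] :
    ∀ᵐ x ∂μ, DifferentiableAt ℝ φ x := by
  have : ProperSpace E := FiniteDimensional.proper_real E
  refine measure_null_of_locally_null _ fun x _ => ?_
  obtain ⟨K, U, hU, hφU⟩ := hφ x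
  refine ⟨_, inter_mem_nhdsWithin _ (interior_mem_nhds.2 hU), measure_mono_null ?_
    (ae_iff.1 (hφU.ae_differentiableWithinAt_of_mem (μ := μ)))⟩
  rintro y ⟨hy, hyU⟩ h
  exact hy ((h (interior_subset hyU)).differentiableAt (mem_interior_iff_mem_nhds.1 hyU))

section LeibnizRule

variable {E F : Type*} [NormedAddCommGroup E] [NormedSpace ℝ E] [NormedAddCommGroup F]
  [NormedSpace ℝ F] {f : ℝ → E → F} {f' : ℝ → E → E →L[ℝ] F}

theorem hasFDerivAt_intervalIntegral_of_continuous_fderiv (hf : Continuous f.uncurry)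
    (hf' : Continuous f'.uncurry) (hff' : ∀ t x, HasFDerivAt (f t) (f' t x) x)
    (μ : Measure ℝ) [IsLocallyFiniteMeasure μ] (a b : ℝ) (x : E) :
    HasFDerivAt (fun y => ∫ t in a..b, f t y ∂μ) (∫ t in a..b, f' t x ∂μ) x := by
  obtain ⟨C, hC⟩ := exists_eventually_forall_mem_norm_le hf' (isCompact_uIcc (a := a) (b := b)) x
  exact intervalIntegral.hasFDerivAt_integral_of_dominated_of_fderiv_le
    (F := fun y t => f t y) (F' := fun y t => f' t y) (bound := fun _ => C) hC
    (.of_forall fun y => (hf.uncurry_right y).aestronglyMeasurable)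
    ((hf.uncurry_right x).intervalIntegrable a b)
    (hf'.uncurry_right x).aestronglyMeasurable
    (.of_forall fun t ht y hy => hy t (uIoc_subset_uIcc ht))
    intervalIntegrable_const
    (.of_forall fun t _ y _ => hff' t y)

variable [CompleteSpace F]

theorem hasStrictFDerivAt_intervalIntegral_upper_prod (hf : Continuous f.uncurry)
    (hf' : Continuous f'.uncurry) (hff' : ∀ t x, HasFDerivAt (f t) (f' t x) x)
    (a : ℝ) (p : ℝ × E) :
    HasStrictFDerivAt (fun q : ℝ × E => ∫ t in a..q.1, f t q.2)
      ((ContinuousLinearMap.toSpanSingleton ℝ (f p.1 p.2)).coprod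
        (∫ t in a..p.1, f' t p.2)) p := by
  have hasFDerivAt_upper (q : ℝ × E) : HasFDerivAt (fun s => ∫ t in a..s, f t q.2)
      (ContinuousLinearMap.toSpanSingleton ℝ (f q.1 q.2)) q.1 :=
    ((hf.uncurry_right q.2).integral_hasStrictDerivAt a q.1).hasDerivAt.hasFDerivAt
  have continuous_fderiv_upper :
      Continuous fun q : ℝ × E => ContinuousLinearMap.toSpanSingleton ℝ (f q.1 q.2) :=
    (ContinuousLinearMap.toSpanSingletonCLE (𝕜 := ℝ) (E := F)).continuous.comp hf
  have continuous_fderiv_param : Continuous fun q : ℝ × E => ∫ t in a..q.1, f' t q.2 :=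
    intervalIntegral.continuous_parametric_intervalIntegral_of_continuous
      (f := fun (q : ℝ × E) t => f' t q.2)
      (hf'.comp (continuous_snd.prodMk (continuous_snd.comp continuous_fst))) continuous_fst
  exact hasStrictFDerivAt_uncurry_coprod (f := fun s y => ∫ t in a..s, f t y)
    (f₁ := fun s y => ContinuousLinearMap.toSpanSingleton ℝ (f s y))
    (f₂ := fun s y => ∫ t in a..s, f' t y)
    (.of_forall hasFDerivAt_upper)
    (.of_forall fun q => hasFDerivAt_intervalIntegral_of_continuous_fderiv hf hf' hff'
      volume a q.1 q.2)
    continuous_fderiv_upper.continuousAt continuous_fderiv_param.continuousAt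

theorem locallyLipschitz_intervalIntegral_upper (hf : Continuous f.uncurry)
    (hf' : Continuous f'.uncurry) (hff' : ∀ t x, HasFDerivAt (f t) (f' t x) x)
    {φ : E → ℝ} (hφ : LocallyLipschitz φ) (a : ℝ) :
    LocallyLipschitz fun x => ∫ t in a..φ x, f t x := by
  have hprim : LocallyLipschitz fun q : ℝ × E => ∫ t in a..q.1, f t q.2 := fun p =>
    (hasStrictFDerivAt_intervalIntegral_upper_prod hf hf' hff' a p).exists_lipschitzOnWith
  exact hprim.comp (hφ.prodMk LocallyLipschitz.id)

theorem hasFDerivAt_intervalIntegral_upper (hf : Continuous f.uncurry)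
    (hf' : Continuous f'.uncurry) (hff' : ∀ t x, HasFDerivAt (f t) (f' t x) x)
    {φ : E → ℝ} {φ' : E →L[ℝ] ℝ} {x : E} (hφ : HasFDerivAt φ φ' x) (a : ℝ) :
    HasFDerivAt (fun y => ∫ t in a..φ y, f t y)
      (φ'.smulRight (f (φ x) x) + ∫ t in a..φ x, f' t x) x := by
  have hprim := (hasStrictFDerivAt_intervalIntegral_upper_prod hf hf' hff' a (φ x, x)).hasFDerivAt
  refine (hprim.comp (f := fun y => (φ y, y)) x (hφ.prodMk (hasFDerivAt_id x))).congr_fderiv ?_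
  ext v
  simp

theorem stmt_17_general [FiniteDimensional ℝ E] [MeasurableSpace E] [BorelSpace E]
    (hf : Continuous f.uncurry) (hf' : Continuous f'.uncurry)
    (hff' : ∀ t x, HasFDerivAt (f t) (f' t x) x) {φ : E → ℝ} (hφ : LocallyLipschitz φ)
    (a : ℝ) (μ : Measure E) [μ.IsAddHaarMeasure] :
    LocallyLipschitz (fun x => ∫ t in a..φ x, f t x) ∧
    ∀ᵐ x ∂μ, DifferentiableAt ℝ (fun y => ∫ t in a..φ y, f t y) x ∧
      ∀ v, fderiv ℝ (fun y => ∫ t in a..φ y, f t y) x v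
        = fderiv ℝ φ x v • f (φ x) x + ∫ t in a..φ x, f' t x v := by
  refine ⟨locallyLipschitz_intervalIntegral_upper hf hf' hff' hφ a, ?_⟩
  filter_upwards [ae_differentiableAt_of_locallyLipschitz hφ μ] with x hφx
  have hu := hasFDerivAt_intervalIntegral_upper hf hf' hff' hφx.hasFDerivAt a
  refine ⟨hu.differentiableAt, fun v => ?_⟩
  rw [hu.fderiv, add_apply, ContinuousLinearMap.smulRight_apply,
    ContinuousLinearMap.intervalIntegral_apply ((hf'.uncurry_right x).intervalIntegrable a (φ x))]

end LeibnizRule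

/-- Leibniz rule for an integral with Lipschitz upper limit: for `φ`
Lipschitz with `φ > −T` and `H : ℝ × ℝⁿ → ℝ` a `C¹` compactly supported function, the
function `u(x) = ∫_{−T}^{φ(x)} H(t,x) dt` is locally Lipschitz and for a.e. `x` it is
differentiable with
`∂_α u(x) = H(φ(x),x)·∂_αφ(x) + ∫_{−T}^{φ(x)} ∂_α H(t,x) dt`. -/
theorem stmt_17 (n : ℕ) (hn : 1 ≤ n) (T : ℝ)
    (φ : (Fin n → ℝ) → ℝ) (hφ : ∃ K : NNReal, LipschitzWith K φ)
    (hφT : ∀ x, -T < φ x)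
    (H : ℝ × (Fin n → ℝ) → ℝ) (hH : ContDiff ℝ 1 H) (hHc : HasCompactSupport H) :
    LocallyLipschitz (fun x => ∫ t in (-T)..(φ x), H (t, x)) ∧
    ∀ᵐ x : Fin n → ℝ ∂(volume : Measure (Fin n → ℝ)),
      DifferentiableAt ℝ (fun y => ∫ t in (-T)..(φ y), H (t, y)) x ∧
      ∀ α, fderiv ℝ (fun y => ∫ t in (-T)..(φ y), H (t, y)) x (Pi.single α 1)
        = H (φ x, x) * fderiv ℝ φ x (Pi.single α 1)
          + ∫ t in (-T)..(φ x), fderiv ℝ H (t, x) (0, Pi.single α 1) := by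
  obtain ⟨K, hK⟩ := hφ
  let H' (t : ℝ) (x : Fin n → ℝ) := (fderiv ℝ H (t, x)).comp (.inr ℝ ℝ (Fin n → ℝ))
  have hH' : Continuous H'.uncurry :=
    (hH.continuous_fderiv one_ne_zero).clm_comp continuous_const
  have hHH' (t : ℝ) (x : Fin n → ℝ) : HasFDerivAt (fun y => H (t, y)) (H' t x) x :=
    (hH.differentiable one_ne_zero (t, x)).hasFDerivAt.comp x (hasFDerivAt_prodMk_right t x)
  obtain ⟨hu, hae⟩ := stmt_17_general (f := fun t x => H (t, x)) hH.continuous hH' hHH'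
    hK.locallyLipschitz (-T) volume
  exact ⟨hu, hae.mono fun x hx =>
    ⟨hx.1, fun α => by simpa [H', mul_comm] using hx.2 (Pi.single α 1)⟩⟩
end
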